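/- Fix ν ≥ 2 and positive integers s,t, let f_{i,j} ∈ L¹([-π,π]; ℂ^{s×t}) for i,j = 1,…,ν, and let A_n be the ν×ν block matrix with (i,j) block T_{n_i,n_j}(f_{i,j}) where n_1 = n_2 = ⋯ = n_ν = n(ν) = n/ν. For a positive integer μ define the permutation matrix Π_μ = ([rows I_ν ⊗ e_1ᵀ; I_ν ⊗ e_2ᵀ; …; I_ν ⊗ e_{n(ν)}ᵀ]) ⊗ I_μ, where e_k is the k-th canonical basis vector of ℂ^{n(ν)}. Then Π_s A_n Π_tᵀ = T_{n(ν)}(F), where F = (f_{i,j})_{i,j=1}^ν : [-π,π] → ℂ^{νs×νt}. Consequently {A_n}_n ∼_σ F, and if in addition F is Hermitian-valued (forcing s = t) then {A_n}_n ∼_λ F. -/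

import Mathlib

open MeasureTheory Filter Topology Matrix
open scoped Real

noncomputable section

/-- Sum of `F` over the eigenvalues (with multiplicity) of a square complex matrix,
the eigenvalues being the roots of the characteristic polynomial. -/
def eigSum {ι : Type*} [Fintype ι] [DecidableEq ι] (F : ℂ → ℂ) (A : Matrix ι ι ℂ) : ℂ :=
  (A.charpoly.roots.map F).sum

/-- Sum of `F` over the singular values `σ_1, …, σ_{min(#rows,#cols)}` of a rectangular
complex matrix: the singular values are the square roots of the eigenvalues of `A * Aᴴ`,
discarding the `#rows - min(#rows,#cols)` superfluous zero ones. -/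
def svSum {m n : Type*} [Fintype m] [Fintype n] [DecidableEq m]
    (F : ℝ → ℂ) (A : Matrix m n ℂ) : ℂ :=
  (∑ i, F (Real.sqrt ((Matrix.isHermitian_mul_conjTranspose_self A).eigenvalues i))) -
    ((Fintype.card m - min (Fintype.card m) (Fintype.card n) : ℕ) : ℂ) * F 0

/-- `{A_n}_n ∼_σ f` : the matrix-sequence `A` is distributed as the matrix-valued
symbol `f : Ω → ℂ^{ρ×τ}` in the sense of the singular values (Weyl sense). -/
def DistributedSV {Θ : Type*} [MeasureSpace Θ] (Ω : Set Θ)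
    {ρ τ : Type*} [Fintype ρ] [Fintype τ] [DecidableEq ρ]
    (f : Θ → Matrix ρ τ ℂ)
    {ι κ : ℕ → Type} [∀ n, Fintype (ι n)] [∀ n, Fintype (κ n)] [∀ n, DecidableEq (ι n)]
    (A : ∀ n, Matrix (ι n) (κ n) ℂ) : Prop :=
  ∀ F : ℝ → ℂ, Continuous F → HasCompactSupport F →
    Tendsto
      (fun n => ((min (Fintype.card (ι n)) (Fintype.card (κ n)) : ℕ) : ℂ)⁻¹ * svSum F (A n))
      atTop
      (𝓝 (((volume Ω).toReal : ℂ)⁻¹ *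
        ∫ θ in Ω, ((min (Fintype.card ρ) (Fintype.card τ) : ℕ) : ℂ)⁻¹ * svSum F (f θ)))

/-- `{A_n}_n ∼_λ f` : the matrix-sequence `A` is distributed as the matrix-valued
symbol `f : Ω → ℂ^{ρ×ρ}` in the sense of the eigenvalues (Weyl sense). -/
def DistributedEig {Θ : Type*} [MeasureSpace Θ] (Ω : Set Θ)
    {ρ : Type*} [Fintype ρ] [DecidableEq ρ]
    (f : Θ → Matrix ρ ρ ℂ)
    {ι : ℕ → Type} [∀ n, Fintype (ι n)] [∀ n, DecidableEq (ι n)]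
    (A : ∀ n, Matrix (ι n) (ι n) ℂ) : Prop :=
  ∀ F : ℂ → ℂ, Continuous F → HasCompactSupport F →
    Tendsto (fun n => ((Fintype.card (ι n) : ℕ) : ℂ)⁻¹ * eigSum F (A n)) atTop
      (𝓝 (((volume Ω).toReal : ℂ)⁻¹ *
        ∫ θ in Ω, ((Fintype.card ρ : ℕ) : ℂ)⁻¹ * eigSum F (f θ)))

/-- `{A_n}_n ∼_σ α I` (constant symbol `α I_s`, `α = 0` being the notion of a
zero-distributed matrix-sequence): the limit of the singular value averages is `F(α)`. -/
def DistributedSVConst (α : ℝ)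
    {ι κ : ℕ → Type} [∀ n, Fintype (ι n)] [∀ n, Fintype (κ n)] [∀ n, DecidableEq (ι n)]
    (A : ∀ n, Matrix (ι n) (κ n) ℂ) : Prop :=
  ∀ F : ℝ → ℂ, Continuous F → HasCompactSupport F →
    Tendsto
      (fun n => ((min (Fintype.card (ι n)) (Fintype.card (κ n)) : ℕ) : ℂ)⁻¹ * svSum F (A n))
      atTop (𝓝 (F α))

/-- `{A_n}_n ∼_λ α I` (constant symbol `α I_s`, `α` real): the limit of the eigenvalue
averages is `F(α)`. -/
def DistributedEigConst (α : ℝ)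
    {ι : ℕ → Type} [∀ n, Fintype (ι n)] [∀ n, DecidableEq (ι n)]
    (A : ∀ n, Matrix (ι n) (ι n) ℂ) : Prop :=
  ∀ F : ℂ → ℂ, Continuous F → HasCompactSupport F →
    Tendsto (fun n => ((Fintype.card (ι n) : ℕ) : ℂ)⁻¹ * eigSum F (A n)) atTop
      (𝓝 (F (α : ℂ)))

/-- The `k`-th Fourier coefficient (computed entrywise) of a matrix-valued function on
`[-π, π]`: `f̂_k = (1/2π) ∫_{-π}^{π} f(θ) e^{-ικθ} dθ`. -/
def fCoeff {ρ τ : Type*} (f : ℝ → Matrix ρ τ ℂ) (k : ℤ) : Matrix ρ τ ℂ :=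
  Matrix.of fun a b =>
    ((2 * π : ℝ) : ℂ)⁻¹ *
      ∫ θ in (-π : ℝ)..π, f θ a b * Complex.exp (-(Complex.I * (k : ℂ) * (θ : ℂ)))

/-- The (rectangular) block Toeplitz matrix `T_{n,n'}(f) = [f̂_{i-j}]`, of size
`sn × tn'` when `f` is `s × t` matrix-valued. -/
def blockToeplitz {ρ τ : Type*} (f : ℝ → Matrix ρ τ ℂ) (n n' : ℕ) :
    Matrix (Fin n × ρ) (Fin n' × τ) ℂ :=
  Matrix.of fun p q => fCoeff f (((p.1 : ℕ) : ℤ) - ((q.1 : ℕ) : ℤ)) p.2 q.2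

/-- The `ν × ν` block matrix `A_n` with equal block sizes `n(ν) = N`, whose `(i,j)`
block is the block Toeplitz matrix `T_N(f_{i,j})`; the row index `((i,k),a)` consists of
the block row `i`, the Toeplitz row `k` and the intra-block row `a`. -/
def blockMatEq (ν s t : ℕ) (f : Fin ν → Fin ν → ℝ → Matrix (Fin s) (Fin t) ℂ) (N : ℕ) :
    Matrix ((Fin ν × Fin N) × Fin s) ((Fin ν × Fin N) × Fin t) ℂ :=
  Matrix.of fun P Q =>
    fCoeff (f P.1.1 Q.1.1) (((P.1.2 : ℕ) : ℤ) - ((Q.1.2 : ℕ) : ℤ)) P.2 Q.2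

/-- The permutation matrix `Π_μ = [I_ν ⊗ e_1ᵀ; I_ν ⊗ e_2ᵀ; …; I_ν ⊗ e_Nᵀ] ⊗ I_μ`:
the stacked matrix has row index `(k,i)` (stack block `k`, row `i` of `I_ν ⊗ e_kᵀ`) and
column index `(j,l)`, with entry `(I_ν)_{ij} (e_kᵀ)_l`. -/
def permPi (ν N μ : ℕ) : Matrix ((Fin N × Fin ν) × Fin μ) ((Fin ν × Fin N) × Fin μ) ℂ :=
  Matrix.kroneckerMap (· * ·)
    (Matrix.of fun (p : Fin N × Fin ν) (q : Fin ν × Fin N) =>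
      if p.2 = q.1 ∧ p.1 = q.2 then (1 : ℂ) else 0)
    (1 : Matrix (Fin μ) (Fin μ) ℂ)

/-- The block Toeplitz matrix `T_N(F)` generated by the `νs × νt` matrix-valued symbol
`F = (f_{i,j})_{i,j=1}^ν`, with row index `((k,i),a)`: Toeplitz row `k` and row `(i,a)`
within the `νs × νt` Fourier coefficient `F̂_{k-l}`. -/
def toeplitzOfBlockSymbol (ν s t : ℕ)
    (f : Fin ν → Fin ν → ℝ → Matrix (Fin s) (Fin t) ℂ) (N : ℕ) :
    Matrix ((Fin N × Fin ν) × Fin s) ((Fin N × Fin ν) × Fin t) ℂ :=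
  Matrix.of fun P Q =>
    fCoeff (f P.1.2 Q.1.2) (((P.1.1 : ℕ) : ℤ) - ((Q.1.1 : ℕ) : ℤ)) P.2 Q.2

/-- The `νs × νt` matrix-valued symbol `F = (f_{i,j})_{i,j=1}^ν`. -/
def blockSymbol (ν s t : ℕ) (f : Fin ν → Fin ν → ℝ → Matrix (Fin s) (Fin t) ℂ) :
    ℝ → Matrix (Fin ν × Fin s) (Fin ν × Fin t) ℂ :=
  fun θ => Matrix.of fun p q => f p.1 q.1 θ p.2 q.2

open scoped Matrix.Norms.L2Operator in
/-- bilinear bound -/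
lemma xx_bilin {m : Type*} [Fintype m] [DecidableEq m] (M : Matrix m m ℂ) (x y : m → ℂ) :
    ‖x ⬝ᵥ (M *ᵥ y)‖ ≤ ‖M‖ * (Real.sqrt (∑ i, ‖x i‖ ^ 2) * Real.sqrt (∑ i, ‖y i‖ ^ 2)) := by
  have h1 := Matrix.l2_opNorm_mulVec M (WithLp.toLp 2 y)
  have h2 : x ⬝ᵥ (M *ᵥ y) = inner ℂ (WithLp.toLp 2 (star x)) (WithLp.toLp 2 (M *ᵥ y)) := by
    simp [EuclideanSpace.inner_eq_star_dotProduct, dotProduct_comm]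
  rw [h2]
  refine (norm_inner_le_norm _ _).trans ?_
  have h3 : ‖WithLp.toLp 2 (M *ᵥ y)‖ ≤ ‖M‖ * ‖WithLp.toLp 2 y‖ := h1
  have h4 : ‖(WithLp.toLp 2 (star x) : EuclideanSpace ℂ m)‖ = Real.sqrt (∑ i, ‖x i‖ ^ 2) := by
    rw [EuclideanSpace.norm_eq]; simp
  have h5 : ‖(WithLp.toLp 2 y : EuclideanSpace ℂ m)‖ = Real.sqrt (∑ i, ‖y i‖ ^ 2) := by
    rw [EuclideanSpace.norm_eq]
  rw [h4]
  rw [h5] at h3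
  calc _ ≤ Real.sqrt (∑ i, ‖x i‖ ^ 2) * (‖M‖ * Real.sqrt (∑ i, ‖y i‖ ^ 2)) := by gcongr
    _ = _ := by ring

/-- eigenvalue sum of a Hermitian matrix -/
lemma xx_eigSum {m : Type*} [Fintype m] [DecidableEq m] {A : Matrix m m ℂ} (hA : A.IsHermitian)
    (F : ℂ → ℂ) : eigSum F A = ∑ i, F (hA.eigenvalues i : ℂ) := by
  simp [eigSum, hA.roots_charpoly_eq_eigenvalues]

/-- the resolvent -/
def resolv {m : Type*} [Fintype m] [DecidableEq m] (A : Matrix m m ℂ) (z : ℂ) : Matrix m m ℂ :=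
  (A - z • (1 : Matrix m m ℂ))⁻¹

lemma xx_sub_ne {z : ℂ} (hz : z.im ≠ 0) (x : ℝ) : (x : ℂ) - z ≠ 0 := by
  intro h
  have := congrArg Complex.im h
  simp at this
  exact hz this

lemma xx_inv_le {z : ℂ} (hz : z.im ≠ 0) (x : ℝ) : ‖((x : ℂ) - z)⁻¹‖ ≤ |z.im|⁻¹ := by
  rw [norm_inv]
  have h := Complex.abs_im_le_norm ((x : ℂ) - z)
  simp at h
  exact inv_anti₀ (abs_pos.mpr hz) h

lemma xx_resolv_spec {m : Type*} [Fintype m] [DecidableEq m] {A : Matrix m m ℂ}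
    (hA : A.IsHermitian) {z : ℂ} (hz : z.im ≠ 0) :
    (A - z • 1) * ((hA.eigenvectorUnitary : Matrix m m ℂ) *
      diagonal (fun i => ((hA.eigenvalues i : ℂ) - z)⁻¹) *
      star (hA.eigenvectorUnitary : Matrix m m ℂ)) = 1 := by
  set U := (hA.eigenvectorUnitary : Matrix m m ℂ) with hU
  have h1 : U * star U = 1 := Unitary.coe_mul_star_self _
  have h2 : star U * U = 1 := Unitary.coe_star_mul_self _
  have h3 : A = U * diagonal (fun i => (hA.eigenvalues i : ℂ)) * star U := by
    have := hA.spectral_theorem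
    rw [Unitary.conjStarAlgAut_apply] at this
    exact this
  have h4 : A - z • 1 = U * diagonal (fun i => (hA.eigenvalues i : ℂ) - z) * star U := by
    have : diagonal (fun i => (hA.eigenvalues i : ℂ) - z) =
        diagonal (fun i => (hA.eigenvalues i : ℂ)) - z • (1 : Matrix m m ℂ) := by
      rw [← diagonal_one, ← diagonal_smul, diagonal_sub]
      congr 1; ext i; simp
    rw [this, mul_sub, sub_mul, ← h3]
    simp [h1]
  rw [h4]
  calc _ = U * diagonal (fun i => (hA.eigenvalues i : ℂ) - z) * (star U * U) *
      diagonal (fun i => ((hA.eigenvalues i : ℂ) - z)⁻¹) * star U := by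
        simp only [mul_assoc]
    _ = U * (diagonal (fun i => (hA.eigenvalues i : ℂ) - z) *
      diagonal (fun i => ((hA.eigenvalues i : ℂ) - z)⁻¹)) * star U := by
        rw [h2]; simp only [mul_assoc, one_mul, mul_one]
    _ = 1 := by
        rw [diagonal_mul_diagonal]
        have : (fun i => ((hA.eigenvalues i : ℂ) - z) * ((hA.eigenvalues i : ℂ) - z)⁻¹) =
          fun _ => 1 := by
          ext i; exact mul_inv_cancel₀ (xx_sub_ne hz _)
        rw [this, diagonal_one, mul_one, h1]

lemma xx_resolv_eq {m : Type*} [Fintype m] [DecidableEq m] {A : Matrix m m ℂ}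
    (hA : A.IsHermitian) {z : ℂ} (hz : z.im ≠ 0) :
    resolv A z = ((hA.eigenvectorUnitary : Matrix m m ℂ) *
      diagonal (fun i => ((hA.eigenvalues i : ℂ) - z)⁻¹) *
      star (hA.eigenvectorUnitary : Matrix m m ℂ)) :=
  Matrix.inv_eq_right_inv (xx_resolv_spec hA hz)

lemma xx_resolv_right {m : Type*} [Fintype m] [DecidableEq m] {A : Matrix m m ℂ}
    (hA : A.IsHermitian) {z : ℂ} (hz : z.im ≠ 0) : (A - z • 1) * resolv A z = 1 := by
  rw [xx_resolv_eq hA hz]; exact xx_resolv_spec hA hz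

lemma xx_resolv_left {m : Type*} [Fintype m] [DecidableEq m] {A : Matrix m m ℂ}
    (hA : A.IsHermitian) {z : ℂ} (hz : z.im ≠ 0) : resolv A z * (A - z • 1) = 1 :=
  mul_eq_one_comm.mp (xx_resolv_right hA hz)

lemma xx_resolv_trace {m : Type*} [Fintype m] [DecidableEq m] {A : Matrix m m ℂ}
    (hA : A.IsHermitian) {z : ℂ} (hz : z.im ≠ 0) :
    (resolv A z).trace = ∑ i, ((hA.eigenvalues i : ℂ) - z)⁻¹ := by
  rw [xx_resolv_eq hA hz, trace_mul_comm, ← mul_assoc, Unitary.coe_star_mul_self, one_mul,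
    trace_diagonal]

open scoped Matrix.Norms.L2Operator in
lemma xx_resolv_norm {m : Type*} [Fintype m] [DecidableEq m] {A : Matrix m m ℂ}
    (hA : A.IsHermitian) {z : ℂ} (hz : z.im ≠ 0) : ‖resolv A z‖ ≤ |z.im|⁻¹ := by
  rw [xx_resolv_eq hA hz, ← Unitary.coe_star, CStarRing.norm_mul_coe_unitary,
    CStarRing.norm_coe_unitary_mul, l2_opNorm_diagonal]
  refine (pi_norm_le_iff_of_nonneg (by positivity)).mpr fun i => xx_inv_le hz _

open scoped Matrix.Norms.L2Operator in
lemma xx_entry_norm {m : Type*} [Fintype m] [DecidableEq m] (M : Matrix m m ℂ) (i j : m) :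
    ‖M i j‖ ≤ ‖M‖ := by
  have := xx_bilin M (Pi.single i 1) (Pi.single j 1)
  have e : ∀ k : m, (∑ i, ‖(Pi.single k 1 : m → ℂ) i‖ ^ 2) = 1 := by
    intro k
    rw [Finset.sum_eq_single k] <;> simp +contextual [Pi.single_apply]
  simpa [e] using this

lemma xx_resolv_diff {m : Type*} [Fintype m] [DecidableEq m] {A B : Matrix m m ℂ}
    (hA : A.IsHermitian) (hB : B.IsHermitian) {z : ℂ} (hz : z.im ≠ 0) :
    (resolv A z).trace - (resolv B z).trace =
      ((B - A) * (resolv B z * resolv A z)).trace := by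
  have : resolv A z - resolv B z = resolv A z * (B - A) * resolv B z := by
    have h : B - A = (B - z • 1) - (A - z • 1) := by abel
    rw [h, mul_sub, sub_mul, xx_resolv_left hA hz, mul_assoc, xx_resolv_right hB hz]
    simp
  rw [← trace_sub, this, trace_mul_comm, ← mul_assoc, trace_mul_comm]

open scoped Matrix.Norms.L2Operator in
lemma xx_resolv_prod_norm {m : Type*} [Fintype m] [DecidableEq m] {A B : Matrix m m ℂ}
    (hA : A.IsHermitian) (hB : B.IsHermitian) {z : ℂ} (hz : z.im ≠ 0) :
    ‖resolv B z * resolv A z‖ ≤ |z.im|⁻¹ * |z.im|⁻¹ := by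
  refine (norm_mul_le _ _).trans ?_
  gcongr
  · exact xx_resolv_norm hB hz
  · exact xx_resolv_norm hA hz

/-- pointwise perturbation bound -/
lemma xx_pert_pt {m : Type*} [Fintype m] [DecidableEq m] {A B : Matrix m m ℂ}
    (hA : A.IsHermitian) (hB : B.IsHermitian) {z : ℂ} (hz : z.im ≠ 0) :
    ‖(resolv A z).trace - (resolv B z).trace‖ ≤
      (|z.im|⁻¹ * |z.im|⁻¹) * ∑ a, ∑ b, ‖A a b - B a b‖ := by
  rw [xx_resolv_diff hA hB hz]
  simp only [trace, diag_apply, mul_apply]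
  rw [Finset.mul_sum]
  refine (norm_sum_le _ _).trans (Finset.sum_le_sum fun a _ => ?_)
  rw [Finset.mul_sum]
  refine (norm_sum_le _ _).trans (Finset.sum_le_sum fun b _ => ?_)
  rw [norm_mul, mul_comm]
  gcongr
  · exact (xx_entry_norm _ _ _).trans (xx_resolv_prod_norm hA hB hz)
  · rw [Matrix.sub_apply, norm_sub_rev]

lemma xx_resolv_trace_bound {m : Type*} [Fintype m] [DecidableEq m] {A : Matrix m m ℂ}
    (hA : A.IsHermitian) {z : ℂ} (hz : z.im ≠ 0) :
    ‖(resolv A z).trace‖ ≤ Fintype.card m * |z.im|⁻¹ := by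
  rw [xx_resolv_trace hA hz]
  refine (norm_sum_le _ _).trans ?_
  refine (Finset.sum_le_sum fun i _ => xx_inv_le hz _).trans ?_
  simp

/-- scalar Fourier coefficient -/
def fc (u : ℝ → ℂ) (k : ℤ) : ℂ :=
  ((2 * π : ℝ) : ℂ)⁻¹ *
      ∫ θ in (-π : ℝ)..π, u θ * Complex.exp (-(Complex.I * (k : ℂ) * (θ : ℂ)))

lemma xx_exp_norm (k : ℤ) (θ : ℝ) : ‖Complex.exp (-(Complex.I * (k : ℂ) * (θ : ℂ)))‖ = 1 := by
  rw [Complex.norm_exp]; simp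

lemma xx_exp_int {u : ℝ → ℂ} (hu : IntervalIntegrable u volume (-π) π) (k : ℤ) :
    IntervalIntegrable (fun θ : ℝ => u θ * Complex.exp (-(Complex.I * (k : ℂ) * (θ : ℂ))))
      volume (-π) π :=
  hu.mul_continuousOn (by fun_prop)

lemma xx_T_apply {ρ τ : Type*} (f : ℝ → Matrix ρ τ ℂ) (n n' : ℕ) (k : Fin n) (l : Fin n')
    (a : ρ) (b : τ) : blockToeplitz f n n' (k, a) (l, b) =
      fc (fun θ => f θ a b) ((k : ℕ) - (l : ℕ) : ℤ) := rfl

open scoped Matrix.Norms.L2Operator in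
lemma xx_kernel_bound {ρ : Type*} [Fintype ρ] [DecidableEq ρ] (N : ℕ)
    (U : Matrix (Fin N × ρ) (Fin N × ρ) ℂ) (a b : ρ) (θ : ℝ) :
    ‖∑ k : Fin N, ∑ l : Fin N, Complex.exp (-(Complex.I * (((k : ℕ) - (l : ℕ) : ℤ) : ℂ) * (θ : ℂ)))
      * U (l, b) (k, a)‖ ≤ N * ‖U‖ := by
  have h := xx_bilin U
    (fun p => if p.2 = b then Complex.exp (-(Complex.I * ((-(p.1 : ℕ) : ℤ) : ℂ) * (θ : ℂ))) else 0)
    (fun p => if p.2 = a then Complex.exp (-(Complex.I * (((p.1 : ℕ) : ℤ) : ℂ) * (θ : ℂ))) else 0)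
  have e : ∀ (b : ρ) (s : Fin N → ℤ), (∑ p : Fin N × ρ, ‖(if p.2 = b then
      Complex.exp (-(Complex.I * (s p.1 : ℂ) * (θ : ℂ))) else 0)‖ ^ 2) = N := by
    intro b s
    rw [Fintype.sum_prod_type]
    have : ∀ x : Fin N, (∑ y : ρ, ‖(if y = b then
      Complex.exp (-(Complex.I * (s x : ℂ) * (θ : ℂ))) else 0)‖ ^ 2) = 1 := by
      intro x
      rw [Finset.sum_eq_single b]
      · simp only [if_true, xx_exp_norm]; norm_num
      · intro c _ hc; simp [hc]
      · simp
    simp only [this]; simp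
  rw [e b (fun k => -(k : ℕ)), e a (fun k => (k : ℕ)), Real.mul_self_sqrt (by positivity),
    mul_comm] at h
  refine le_of_eq_of_le ?_ h
  congr 1
  simp only [dotProduct, mulVec, Fintype.sum_prod_type]
  simp only [ite_mul, mul_ite, zero_mul, mul_zero, Finset.sum_ite_eq', Finset.mem_univ, if_true,
    Finset.sum_ite_irrel, Finset.sum_const_zero]
  rw [Finset.sum_comm]
  refine Finset.sum_congr rfl fun l _ => ?_
  rw [Finset.mul_sum]
  refine Finset.sum_congr rfl fun k _ => ?_
  rw [mul_comm (U _ _), ← mul_assoc, ← Complex.exp_add]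
  congr 2
  push_cast; ring

open scoped Matrix.Norms.L2Operator in
lemma xx_trace_T {ρ : Type*} [Fintype ρ] [DecidableEq ρ] (h : ℝ → Matrix ρ ρ ℂ)
    (hh : ∀ a b, IntervalIntegrable (fun θ => h θ a b) volume (-π) π) (N : ℕ)
    (U : Matrix (Fin N × ρ) (Fin N × ρ) ℂ) :
    ‖(blockToeplitz h N N * U).trace‖ ≤
      (N * ‖U‖) * ((2 * π)⁻¹ * ∑ a, ∑ b, ∫ θ in (-π : ℝ)..π, ‖h θ a b‖) := by
  have e : (blockToeplitz h N N * U).trace = ∑ a, ∑ b, ((2 * π : ℝ) : ℂ)⁻¹ *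
      ∫ θ in (-π : ℝ)..π, h θ a b * ∑ k : Fin N, ∑ l : Fin N,
        Complex.exp (-(Complex.I * (((k : ℕ) - (l : ℕ) : ℤ) : ℂ) * (θ : ℂ))) * U (l, b) (k, a) := by
    simp only [trace, diag_apply, mul_apply, Fintype.sum_prod_type]
    rw [Finset.sum_comm]
    refine Finset.sum_congr rfl fun a _ => ?_
    have : ∀ k : Fin N, ∑ l : Fin N, ∑ b : ρ, blockToeplitz h N N (k, a) (l, b) * U (l, b) (k, a) =
      ∑ b : ρ, ∑ l : Fin N, blockToeplitz h N N (k, a) (l, b) * U (l, b) (k, a) :=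
      fun k => Finset.sum_comm
    simp only [this]
    rw [Finset.sum_comm]
    refine Finset.sum_congr rfl fun b _ => ?_
    simp only [Finset.mul_sum]
    rw [intervalIntegral.integral_finsetSum, Finset.mul_sum]
    · refine Finset.sum_congr rfl fun k _ => ?_
      rw [intervalIntegral.integral_finsetSum, Finset.mul_sum]
      · refine Finset.sum_congr rfl fun l _ => ?_
        rw [xx_T_apply, fc, mul_assoc, ← intervalIntegral.integral_mul_const]
        simp only [mul_assoc]
      · intro l _
        simp only [← mul_assoc]
        exact (xx_exp_int (hh a b) _).mul_const _
    · intro k _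
      have := IntervalIntegrable.sum (μ := volume) (a := -π) (b := π) (Finset.univ : Finset (Fin N))
        (f := fun l θ => h θ a b * (Complex.exp (-(Complex.I * (((k : ℕ) - (l : ℕ) : ℤ) : ℂ) *
          (θ : ℂ))) * U (l, b) (k, a))) (by
          intro l _
          simp only [← mul_assoc]
          exact (xx_exp_int (hh a b) _).mul_const _)
      refine this.congr (fun θ _ => ?_)
      simp
  rw [e]
  rw [Finset.mul_sum, Finset.mul_sum]
  refine (norm_sum_le _ _).trans (Finset.sum_le_sum fun a _ => ?_)
  rw [Finset.mul_sum, Finset.mul_sum]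
  refine (norm_sum_le _ _).trans (Finset.sum_le_sum fun b _ => ?_)
  have hpi : -π ≤ π := by linarith [Real.pi_pos]
  have : ‖∫ θ in (-π : ℝ)..π, h θ a b * ∑ k : Fin N, ∑ l : Fin N,
        Complex.exp (-(Complex.I * (((k : ℕ) - (l : ℕ) : ℤ) : ℂ) * (θ : ℂ))) * U (l, b) (k, a)‖ ≤
      ∫ θ in (-π : ℝ)..π, (N * ‖U‖) * ‖h θ a b‖ := by
    refine intervalIntegral.norm_integral_le_of_norm_le hpi ?_ ((hh a b).norm.const_mul _)
    refine Filter.Eventually.of_forall fun θ _ => ?_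
    rw [norm_mul, mul_comm]
    gcongr
    exact xx_kernel_bound N U a b θ
  rw [intervalIntegral.integral_const_mul] at this
  rw [norm_mul, norm_inv, Complex.norm_real, Real.norm_of_nonneg (by positivity)]
  calc _ ≤ (2 * π)⁻¹ * (N * ‖U‖ * ∫ θ in (-π : ℝ)..π, ‖h θ a b‖) := by gcongr
    _ = _ := by ring

lemma xx_T_sub {ρ τ : Type*} (f g : ℝ → Matrix ρ τ ℂ) 
    (hf : ∀ a b, IntervalIntegrable (fun θ => f θ a b) volume (-π) π)
    (hg : ∀ a b, IntervalIntegrable (fun θ => g θ a b) volume (-π) π) (N : ℕ) :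
    blockToeplitz (fun θ => f θ - g θ) N N = blockToeplitz f N N - blockToeplitz g N N := by
  ext ⟨k, a⟩ ⟨l, b⟩
  rw [Matrix.sub_apply]
  simp only [xx_T_apply, fc, Matrix.sub_apply, sub_mul]
  rw [intervalIntegral.integral_sub (xx_exp_int (hf a b) _) (xx_exp_int (hg a b) _), mul_sub]

lemma xx_fc_conj (u : ℝ → ℂ) (k : ℤ) : star (fc u k) = fc (fun θ => star (u θ)) (-k) := by
  have hpi : -π ≤ π := by linarith [Real.pi_pos]
  simp only [fc, star_mul']
  congr 1
  · simp
  · rw [Complex.star_def, intervalIntegral.integral_of_le hpi, intervalIntegral.integral_of_le hpi,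
      ← integral_conj]
    congr 1; ext θ
    simp only [map_mul, ← Complex.exp_conj, Complex.star_def]
    simp

lemma xx_fc_congr {u v : ℝ → ℂ} (h : ∀ θ ∈ Set.Icc (-π) π, u θ = v θ) (k : ℤ) :
    fc u k = fc v k := by
  have hpi : -π ≤ π := by linarith [Real.pi_pos]
  unfold fc
  congr 1
  refine intervalIntegral.integral_congr fun θ hθ => ?_
  rw [Set.uIcc_of_le hpi] at hθ
  simp only [h θ hθ]

lemma xx_T_herm {ρ : Type*} (f : ℝ → Matrix ρ ρ ℂ)
    (hf : ∀ θ ∈ Set.Icc (-π) π, (f θ).IsHermitian) (N : ℕ) :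
    (blockToeplitz f N N).IsHermitian := by
  ext ⟨k, a⟩ ⟨l, b⟩
  rw [conjTranspose_apply, xx_T_apply, xx_T_apply, xx_fc_conj, neg_sub]
  refine xx_fc_congr (fun θ hθ => ?_) _
  exact (hf θ hθ).apply a b

/-- perturbation bound for Toeplitz resolvents -/
lemma xx_pert_T {ρ : Type*} [Fintype ρ] [DecidableEq ρ] (f g : ℝ → Matrix ρ ρ ℂ)
    (hf : ∀ a b, IntervalIntegrable (fun θ => f θ a b) volume (-π) π)
    (hg : ∀ a b, IntervalIntegrable (fun θ => g θ a b) volume (-π) π)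
    (hf' : ∀ θ ∈ Set.Icc (-π) π, (f θ).IsHermitian)
    (hg' : ∀ θ ∈ Set.Icc (-π) π, (g θ).IsHermitian) {z : ℂ} (hz : z.im ≠ 0) (N : ℕ) :
    ‖(resolv (blockToeplitz f N N) z).trace - (resolv (blockToeplitz g N N) z).trace‖ ≤
      (N * (|z.im|⁻¹ * |z.im|⁻¹)) *
        ((2 * π)⁻¹ * ∑ a, ∑ b, ∫ θ in (-π : ℝ)..π, ‖f θ a b - g θ a b‖) := by
  have hpi : -π ≤ π := by linarith [Real.pi_pos]
  rw [norm_sub_rev, xx_resolv_diff (xx_T_herm g hg' N) (xx_T_herm f hf' N) hz,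
    ← xx_T_sub f g hf hg]
  refine (xx_trace_T _ (fun a b => (hf a b).sub (hg a b)) N _).trans ?_
  change _ * ((2 * π)⁻¹ * ∑ a, ∑ b, ∫ θ in (-π : ℝ)..π, ‖f θ a b - g θ a b‖) ≤ _
  gcongr
  · refine mul_nonneg (by positivity) (Finset.sum_nonneg fun a _ => Finset.sum_nonneg fun b _ => ?_)
    exact intervalIntegral.integral_nonneg hpi fun _ _ => norm_nonneg _
  · exact xx_resolv_prod_norm (xx_T_herm g hg' N) (xx_T_herm f hf' N) hz

lemma xx_resolv_meas {α ρ : Type*} [MeasurableSpace α] [Fintype ρ] [DecidableEq ρ] {μ : Measure α}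
    (f : α → Matrix ρ ρ ℂ)
    (hf : ∀ a b, AEMeasurable (fun θ => f θ a b) μ) (z : ℂ) (a b : ρ) :
    AEMeasurable (fun θ => resolv (f θ) z a b) μ := by
  have h1 : AEMeasurable (fun θ => fun a b => f θ a b) μ :=
    aemeasurable_pi_iff.mpr fun a => aemeasurable_pi_iff.mpr fun b => hf a b
  have h2 : Measurable (fun M : ρ → ρ → ℂ => (Matrix.of M - z • (1 : Matrix ρ ρ ℂ)).det) := by
    have : Continuous (fun M : ρ → ρ → ℂ => (Matrix.of M - z • (1 : Matrix ρ ρ ℂ)).det) := by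
      refine Continuous.matrix_det ?_
      refine Continuous.sub ?_ continuous_const
      exact continuous_id
    exact this.measurable
  have h3 : Measurable
      (fun M : ρ → ρ → ℂ => (Matrix.of M - z • (1 : Matrix ρ ρ ℂ)).adjugate a b) := by
    have : Continuous (fun M : ρ → ρ → ℂ =>
        (Matrix.of M - z • (1 : Matrix ρ ρ ℂ)).adjugate a b) := by
      refine Continuous.matrix_elem ?_ a b
      refine Continuous.matrix_adjugate ?_
      refine Continuous.sub ?_ continuous_const
      exact continuous_id
    exact this.measurable
  have h4 := (h2.inv.mul h3).comp_aemeasurable h1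
  refine h4.congr (Filter.Eventually.of_forall fun θ => ?_)
  simp only [Function.comp, resolv, Matrix.inv_def, Ring.inverse_eq_inv', Matrix.smul_apply,
    smul_eq_mul, Pi.mul_apply, Pi.inv_apply]
  rfl

lemma xx_fc_shift (u : ℝ → ℂ) (j n : ℤ) :
    fc (fun θ => Complex.exp (Complex.I * (j : ℂ) * (θ : ℂ)) * u θ) n = fc u (n - j) := by
  unfold fc
  congr 2; ext θ
  beta_reduce
  rw [mul_comm _ (u θ), mul_assoc, ← Complex.exp_add]
  congr 2
  push_cast; ring

lemma xx_fc_const_mul (u : ℝ → ℂ) (c : ℂ) (n : ℤ) :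
    fc (fun θ => c * u θ) n = c * fc u n := by
  simp only [fc, mul_assoc, intervalIntegral.integral_const_mul]
  ring

lemma xx_fc_sum {ι : Type*} (s : Finset ι) (u : ι → ℝ → ℂ)
    (hu : ∀ i ∈ s, IntervalIntegrable (u i) volume (-π) π) (n : ℤ) :
    fc (fun θ => ∑ i ∈ s, u i θ) n = ∑ i ∈ s, fc (u i) n := by
  simp only [fc, Finset.sum_mul]
  rw [intervalIntegral.integral_finsetSum, Finset.mul_sum]
  intro i hi
  exact xx_exp_int (hu i hi) _

lemma xx_fc_one (n : ℤ) : fc (fun _ => 1) n = if n = 0 then 1 else 0 := by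
  have hp : (π : ℂ) ≠ 0 := by exact_mod_cast Real.pi_ne_zero
  unfold fc
  split_ifs with h
  · subst h
    simp only [one_mul, Int.cast_zero, mul_zero, zero_mul, neg_zero, Complex.exp_zero,
      intervalIntegral.integral_const]
    simp
    field_simp
    ring
  · have hn : (n : ℂ) ≠ 0 := by exact_mod_cast h
    have : ∀ θ : ℝ, (1 : ℂ) * Complex.exp (-(Complex.I * n * θ)) =
        Complex.exp ((-(Complex.I * n)) * θ) := by
      intro θ; rw [one_mul]; congr 1; ring
    simp only [this]
    rw [integral_exp_mul_complex (by simp [hn])]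
    have : Complex.exp (-(Complex.I * n) * (π : ℝ)) = Complex.exp (-(Complex.I * n) * (-π : ℝ)) := by
      rw [Complex.exp_eq_exp_iff_exists_int]
      exact ⟨-n, by push_cast; ring⟩
    rw [this]; simp

lemma xx_fc_bound {u : ℝ → ℂ} {B : ℝ} (hu : ∀ θ, ‖u θ‖ ≤ B) (n : ℤ) : ‖fc u n‖ ≤ B := by
  unfold fc
  have h : ‖∫ θ in (-π : ℝ)..π, u θ * Complex.exp (-(Complex.I * (n : ℂ) * (θ : ℂ)))‖ ≤
      B * |π - -π| := by
    refine intervalIntegral.norm_integral_le_of_norm_le_const fun θ _ => ?_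
    rw [norm_mul, xx_exp_norm, mul_one]; exact hu θ
  have e : |π - -π| = 2 * π := by
    rw [abs_of_pos] <;> linarith [Real.pi_pos]
  rw [e] at h
  rw [norm_mul, norm_inv, Complex.norm_real, Real.norm_of_nonneg (by positivity)]
  have hp := Real.pi_pos
  rw [inv_mul_le_iff₀ (by positivity)]
  linarith

/-- matrix trigonometric polynomial -/
def trigP {ρ : Type*} (d : ℕ) (C : ℤ → Matrix ρ ρ ℂ) (θ : ℝ) : Matrix ρ ρ ℂ :=
  Matrix.of fun a b => ∑ j ∈ Finset.Icc (-(d : ℤ)) d,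
    Complex.exp (Complex.I * (j : ℂ) * (θ : ℂ)) * C j a b

lemma xx_trigP_cont {ρ : Type*} (d : ℕ) (C : ℤ → Matrix ρ ρ ℂ) (a b : ρ) :
    Continuous (fun θ => trigP d C θ a b) := by
  simp only [trigP, Matrix.of_apply]
  fun_prop

lemma xx_fc_trig_mul {ρ : Type*} [Fintype ρ] (d : ℕ) (C : ℤ → Matrix ρ ρ ℂ)
    (q : ℝ → Matrix ρ ρ ℂ) (hq : ∀ a b, IntervalIntegrable (fun θ => q θ a b) volume (-π) π)
    (a b : ρ) (n : ℤ) :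
    fc (fun θ => (trigP d C θ * q θ) a b) n =
      ∑ j ∈ Finset.Icc (-(d : ℤ)) d, ∑ c, C j a c * fc (fun θ => q θ c b) (n - j) := by
  have : (fun θ => (trigP d C θ * q θ) a b) = fun θ : ℝ => ∑ j ∈ Finset.Icc (-(d : ℤ)) d, ∑ c,
      C j a c * (Complex.exp (Complex.I * (j : ℂ) * (θ : ℂ)) * q θ c b) := by
    ext θ
    rw [Finset.sum_comm]
    simp only [mul_apply, trigP, Matrix.of_apply, Finset.sum_mul]
    refine Finset.sum_congr rfl fun c _ => Finset.sum_congr rfl fun j _ => ?_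
    ring
  have hi : ∀ j : ℤ, ∀ c, IntervalIntegrable (fun θ : ℝ => C j a c *
      (Complex.exp (Complex.I * (j : ℂ) * (θ : ℂ)) * q θ c b)) volume (-π) π := fun j c =>
    ((hq c b).continuousOn_mul (by fun_prop)).const_mul _
  rw [this, xx_fc_sum]
  · refine Finset.sum_congr rfl fun j _ => ?_
    rw [xx_fc_sum]
    · refine Finset.sum_congr rfl fun c _ => ?_
      rw [xx_fc_const_mul, xx_fc_shift]
    · intro c _; exact hi j c
  · intro j _
    refine (IntervalIntegrable.sum (μ := volume) (a := -π) (b := π) (Finset.univ : Finset ρ)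
        (fun c _ => hi j c)).congr (fun θ _ => ?_)
    simp

lemma xx_fc_trig {ρ : Type*} [Fintype ρ] [DecidableEq ρ] (d : ℕ) (C : ℤ → Matrix ρ ρ ℂ)
    (hC : ∀ j, j ∉ Finset.Icc (-(d : ℤ)) d → C j = 0) (a b : ρ) (n : ℤ) :
    fc (fun θ => trigP d C θ a b) n = C n a b := by
  have h := xx_fc_trig_mul d C (fun _ => 1) (fun a b => intervalIntegrable_const) a b n
  simp only [mul_one] at h
  rw [h]
  have : ∀ c : ρ, ∀ j, fc (fun _ => (1 : Matrix ρ ρ ℂ) c b) (n - j) =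
      if c = b then (if j = n then 1 else 0) else 0 := by
    intro c j
    by_cases hc : c = b
    · subst hc
      simp only [Matrix.one_apply_eq, xx_fc_one, if_true, sub_eq_zero, eq_comm]
    · simp [Matrix.one_apply_ne hc, hc, fc]
  simp only [this]
  simp
  intro h'
  rw [hC n]; · rfl
  · simpa using h'

lemma xx_fin_sum {M : Type*} [AddCommMonoid M] (N d k : ℕ) (ψ : ℤ → M) (h1 : d ≤ k)
    (h2 : k + d < N) (hψ : ∀ j, j ∉ Finset.Icc (-(d : ℤ)) d → ψ j = 0) :
    ∑ m : Fin N, ψ ((k : ℤ) - (m : ℕ)) = ∑ j ∈ Finset.Icc (-(d : ℤ)) d, ψ j := by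
  let e : Fin N ↪ ℤ := ⟨fun m => (k : ℤ) - (m : ℕ), fun x y h => by
    simp only at h; ext; omega⟩
  have : ∑ m : Fin N, ψ ((k : ℤ) - (m : ℕ)) = ∑ j ∈ Finset.univ.map e, ψ j := by
    rw [Finset.sum_map]; rfl
  rw [this]
  symm
  refine Finset.sum_subset (fun j hj => ?_) (fun j _ hj => hψ j hj)
  rw [Finset.mem_Icc] at hj
  rw [Finset.mem_map]
  refine ⟨⟨((k : ℤ) - j).toNat, by omega⟩, Finset.mem_univ _, ?_⟩
  change (k : ℤ) - ((((k : ℤ) - j).toNat : ℕ) : ℤ) = j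
  omega

lemma xx_fin_sum_le (N d : ℕ) (k : ℤ) (ψ : ℤ → ℝ) (h0 : ∀ j, 0 ≤ ψ j)
    (hψ : ∀ j, j ∉ Finset.Icc (-(d : ℤ)) d → ψ j = 0) :
    ∑ m : Fin N, ψ ((k : ℤ) - (m : ℕ)) ≤ ∑ j ∈ Finset.Icc (-(d : ℤ)) d, ψ j := by
  let e : Fin N ↪ ℤ := ⟨fun m => (k : ℤ) - (m : ℕ), fun x y h => by
    simp only at h; ext; omega⟩
  have : ∑ m : Fin N, ψ ((k : ℤ) - (m : ℕ)) = ∑ j ∈ Finset.univ.map e, ψ j := by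
    rw [Finset.sum_map]; rfl
  rw [this]
  refine (Finset.sum_le_sum_of_subset_of_nonneg (Finset.subset_union_left
    (s₂ := Finset.Icc (-(d : ℤ)) d)) fun j _ _ => h0 j).trans ?_
  refine le_of_eq (Finset.sum_subset Finset.subset_union_right fun j _ hj => hψ j hj).symm

lemma xx_bad_count (N d : ℕ) :
    ((Finset.univ : Finset (Fin N)).filter (fun k : Fin N => ¬ (d ≤ (k : ℕ) ∧ (k : ℕ) + d < N))).card
      ≤ 2 * d := by
  have h : ((Finset.univ : Finset (Fin N)).filter
      (fun k : Fin N => ¬ (d ≤ (k : ℕ) ∧ (k : ℕ) + d < N))).card ≤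
      (Finset.range d ∪ (Finset.Ico (N - d) N)).card := by
    refine Finset.card_le_card_of_injOn (fun k : Fin N => (k : ℕ)) ?_ ?_
    · intro k hk
      have := k.2
      simp at hk ⊢
      omega
    · intro x _ y _ h
      exact Fin.ext h
  refine h.trans ((Finset.card_union_le _ _).trans ?_)
  simp
  omega

lemma xx_TT_apply {ρ : Type*} [Fintype ρ] [DecidableEq ρ] (d : ℕ) (C : ℤ → Matrix ρ ρ ℂ)
    (hC : ∀ j, j ∉ Finset.Icc (-(d : ℤ)) d → C j = 0)
    (q : ℝ → Matrix ρ ρ ℂ) (N : ℕ) (k l : Fin N) (a b : ρ) :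
    (blockToeplitz (trigP d C) N N * blockToeplitz q N N) (k, a) (l, b) =
      ∑ m : Fin N, (fun j : ℤ => ∑ c, C j a c * fc (fun θ => q θ c b)
        (((k : ℕ) - (l : ℕ) : ℤ) - j)) (((k : ℕ) : ℤ) - (m : ℕ)) := by
  rw [mul_apply, Fintype.sum_prod_type]
  refine Finset.sum_congr rfl fun m _ => Finset.sum_congr rfl fun c _ => ?_
  rw [xx_T_apply, xx_T_apply, xx_fc_trig d C hC]
  congr 2
  ring

lemma xx_TT_good {ρ : Type*} [Fintype ρ] [DecidableEq ρ] (d : ℕ) (C : ℤ → Matrix ρ ρ ℂ)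
    (hC : ∀ j, j ∉ Finset.Icc (-(d : ℤ)) d → C j = 0)
    (q : ℝ → Matrix ρ ρ ℂ) (hq : ∀ a b, IntervalIntegrable (fun θ => q θ a b) volume (-π) π)
    (h1 : ∀ θ, trigP d C θ * q θ = 1)
    (N : ℕ) (k l : Fin N) (a b : ρ) (hk : d ≤ (k : ℕ)) (hk' : (k : ℕ) + d < N) :
    (blockToeplitz (trigP d C) N N * blockToeplitz q N N) (k, a) (l, b) =
      (1 : Matrix (Fin N × ρ) (Fin N × ρ) ℂ) (k, a) (l, b) := by
  rw [xx_TT_apply d C hC]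
  refine (xx_fin_sum N d k (fun j : ℤ => ∑ c, C j a c * fc (fun θ => q θ c b)
        (((k : ℕ) - (l : ℕ) : ℤ) - j)) hk hk' (fun j hj => by simp [hC j hj])).trans ?_
  rw [← xx_fc_trig_mul d C q hq]
  simp only [h1]
  by_cases hab : a = b
  · subst hab
    simp only [Matrix.one_apply_eq, xx_fc_one]
    rw [Matrix.one_apply]
    by_cases hkl : k = l
    · subst hkl; simp
    · have : ((k : ℕ) : ℤ) - (l : ℕ) ≠ 0 := by
        intro h; apply hkl; ext; omega
      simp [this, hkl]
  · simp [Matrix.one_apply, hab, fc]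

lemma xx_TT_bound {ρ : Type*} [Fintype ρ] [DecidableEq ρ] (d : ℕ) (C : ℤ → Matrix ρ ρ ℂ)
    (hC : ∀ j, j ∉ Finset.Icc (-(d : ℤ)) d → C j = 0)
    (q : ℝ → Matrix ρ ρ ℂ) {B : ℝ} (hB : ∀ θ a b, ‖q θ a b‖ ≤ B)
    (N : ℕ) (k l : Fin N) (a b : ρ) :
    ‖(blockToeplitz (trigP d C) N N * blockToeplitz q N N) (k, a) (l, b)‖ ≤
      ∑ j ∈ Finset.Icc (-(d : ℤ)) d, ∑ a, ∑ c, ‖C j a c‖ * B := by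
  rw [xx_TT_apply d C hC]
  have hB0 : 0 ≤ B := (norm_nonneg _).trans (hB 0 a a)
  refine (norm_sum_le _ _).trans ?_
  refine le_trans ?_ (xx_fin_sum_le N d ((k : ℕ) : ℤ) (fun j => ∑ a, ∑ c, ‖C j a c‖ * B)
    (fun j => Finset.sum_nonneg fun a _ => Finset.sum_nonneg fun c _ => by positivity)
    (fun j hj => by simp [hC j hj]))
  refine Finset.sum_le_sum fun m _ => ?_
  refine (norm_sum_le _ _).trans ?_
  refine le_trans ?_ (Finset.single_le_sum (f := fun a => ∑ c, ‖C (((k : ℕ) : ℤ) - (m : ℕ)) a c‖ * B)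
    (fun a _ => Finset.sum_nonneg fun c _ => by positivity) (Finset.mem_univ a))
  refine Finset.sum_le_sum fun c _ => ?_
  rw [norm_mul]
  gcongr
  exact xx_fc_bound (fun θ => hB θ c b) _

/-- subtracting a scalar from a trigonometric polynomial -/
lemma xx_trig_sub {ρ : Type*} [Fintype ρ] [DecidableEq ρ] (d : ℕ) (C : ℤ → Matrix ρ ρ ℂ) (z : ℂ)
    (θ : ℝ) : trigP d (fun j => C j - if j = 0 then z • 1 else 0) θ = trigP d C θ - z • 1 := by
  ext a b
  simp only [trigP, Matrix.of_apply, Matrix.sub_apply, mul_sub, Finset.sum_sub_distrib]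
  congr 1
  rw [Finset.sum_eq_single 0]
  · simp
  · intro j _ hj; simp [hj]
  · intro h; simp at h

lemma xx_int_of_bdd {u : ℝ → ℂ} (hu : AEMeasurable u (volume.restrict (Set.Icc (-π) π))) {B : ℝ}
    (hB : ∀ θ ∈ Set.Icc (-π) π, ‖u θ‖ ≤ B) : IntegrableOn u (Set.Icc (-π) π) := by
  refine Integrable.of_bound hu.aestronglyMeasurable B ?_
  exact ae_restrict_of_forall_mem measurableSet_Icc hB

lemma xx_int_of_bdd' {u : ℝ → ℂ} (hu : AEMeasurable u (volume.restrict (Set.Icc (-π) π))) {B : ℝ}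
    (hB : ∀ θ ∈ Set.Icc (-π) π, ‖u θ‖ ≤ B) : IntervalIntegrable u volume (-π) π := by
  have hpi : -π ≤ π := by linarith [Real.pi_pos]
  exact (intervalIntegrable_iff_integrableOn_Icc_of_le hpi).mpr (xx_int_of_bdd hu hB)

lemma xx_T_diag_trace {ρ : Type*} [Fintype ρ]
    (q : ℝ → Matrix ρ ρ ℂ) (hq : ∀ a b, IntervalIntegrable (fun θ => q θ a b) volume (-π) π)
    (N : ℕ) : (blockToeplitz q N N).trace =
      N * (((2 * π : ℝ) : ℂ)⁻¹ * ∫ θ in (-π : ℝ)..π, (q θ).trace) := by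
  simp only [trace, diag_apply, Fintype.sum_prod_type]
  rw [intervalIntegral.integral_finsetSum (fun a _ => hq a a)]
  have : ∀ k : Fin N, ∑ a, blockToeplitz q N N (k, a) (k, a) =
      ((2 * π : ℝ) : ℂ)⁻¹ * ∑ a, ∫ θ in (-π : ℝ)..π, q θ a a := by
    intro k
    rw [Finset.mul_sum]
    refine Finset.sum_congr rfl fun a _ => ?_
    rw [xx_T_apply, fc]
    simp
  simp only [this]
  simp

lemma xx_trig_limit {ρ : Type*} [Fintype ρ] [DecidableEq ρ] (d : ℕ) (C : ℤ → Matrix ρ ρ ℂ)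
    (hC : ∀ j, j ∉ Finset.Icc (-(d : ℤ)) d → C j = 0)
    (hH : ∀ θ, (trigP d C θ).IsHermitian) {z : ℂ} (hz : z.im ≠ 0) :
    Tendsto (fun N : ℕ => (N : ℂ)⁻¹ * (resolv (blockToeplitz (trigP d C) N N) z).trace) atTop
      (𝓝 (((2 * π : ℝ) : ℂ)⁻¹ * ∫ θ in (-π : ℝ)..π, (resolv (trigP d C θ) z).trace)) := by
  set D : ℤ → Matrix ρ ρ ℂ := fun j => C j - if j = 0 then z • 1 else 0 with hD
  have hD0 : ∀ j, j ∉ Finset.Icc (-(d : ℤ)) d → D j = 0 := by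
    intro j hj
    have : j ≠ 0 := by rintro rfl; simp at hj
    simp [hD, hC j hj, this]
  set q : ℝ → Matrix ρ ρ ℂ := fun θ => resolv (trigP d C θ) z with hq
  set B := |z.im|⁻¹ with hB
  have hqB : ∀ θ a b, ‖q θ a b‖ ≤ B := fun θ a b =>
    (xx_entry_norm _ _ _).trans (xx_resolv_norm (hH θ) hz)
  have hqi : ∀ a b, IntervalIntegrable (fun θ => q θ a b) volume (-π) π := fun a b =>
    xx_int_of_bdd' (xx_resolv_meas _ (fun a b => (xx_trigP_cont d C a b).measurable.aemeasurable)
      z a b) (fun θ _ => hqB θ a b)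
  have h1 : ∀ θ, trigP d D θ * q θ = 1 := by
    intro θ
    rw [hD, xx_trig_sub]
    exact xx_resolv_right (hH θ) hz
  have hTD : ∀ N, blockToeplitz (trigP d D) N N = blockToeplitz (trigP d C) N N - z • 1 := by
    intro N
    ext ⟨k, a⟩ ⟨l, b⟩
    rw [Matrix.sub_apply, xx_T_apply, xx_T_apply, xx_fc_trig d D hD0, xx_fc_trig d C hC]
    simp only [hD, Matrix.sub_apply]
    congr 1
    have : ((k : ℕ) : ℤ) - (l : ℕ) = 0 ↔ k = l := by
      rw [Fin.ext_iff]; omega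
    simp only [this]
    by_cases hkl : k = l
    · subst hkl; simp [Matrix.one_apply]
    · simp [hkl, Matrix.one_apply]
  set M := (∑ j ∈ Finset.Icc (-(d : ℤ)) d, ∑ a, ∑ c, ‖D j a c‖ * B) + 1 with hM
  have hB0 : 0 ≤ B := by positivity
  have hM0 : 0 ≤ M := by positivity
  have key : ∀ N : ℕ, ‖(resolv (blockToeplitz (trigP d C) N N) z).trace -
      N * (((2 * π : ℝ) : ℂ)⁻¹ * ∫ θ in (-π : ℝ)..π, (q θ).trace)‖ ≤
        (2 * d * Fintype.card ρ * (B * M * Real.sqrt (Fintype.card ρ))) * Real.sqrt N := by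
    intro N
    have hTH := xx_T_herm (trigP d C) (fun θ _ => hH θ) N
    set S := resolv (blockToeplitz (trigP d C) N N) z with hS
    have hS1 : blockToeplitz (trigP d D) N N * S = 1 := by
      rw [hTD]; exact xx_resolv_right hTH hz
    have hS2 : S * blockToeplitz (trigP d D) N N = 1 := by
      rw [hTD]; exact xx_resolv_left hTH hz
    set E := blockToeplitz (trigP d D) N N * blockToeplitz q N N - 1 with hE
    have htr : S.trace - N * (((2 * π : ℝ) : ℂ)⁻¹ * ∫ θ in (-π : ℝ)..π, (q θ).trace) =
        - (E * S).trace := by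
      rw [← xx_T_diag_trace q hqi, trace_mul_comm, hE, mul_sub, ← mul_assoc, hS2, one_mul, mul_one,
        trace_sub]
      ring
    rw [htr, norm_neg]
    have hEM : ∀ p p', ‖E p p'‖ ≤ M := by
      rintro ⟨k, a⟩ ⟨l, b⟩
      rw [hE, Matrix.sub_apply, hM]
      refine (norm_sub_le _ _).trans (add_le_add (xx_TT_bound d D hD0 q hqB N k l a b) ?_)
      rw [Matrix.one_apply]
      split_ifs <;> simp
    have hdiag : ∀ (k : Fin N) (a : ρ), ‖(E * S) (k, a) (k, a)‖ ≤
        if ¬ (d ≤ (k : ℕ) ∧ (k : ℕ) + d < N) then B * M * Real.sqrt (Fintype.card ρ) * Real.sqrt N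
          else 0 := by
      intro k a
      by_cases hk : (d ≤ (k : ℕ) ∧ (k : ℕ) + d < N)
      swap
      · rw [if_pos hk]
        have e : (E * S) (k, a) (k, a) = (E (k, a)) ⬝ᵥ (S *ᵥ (Pi.single (k, a) 1)) := by
          simp [mul_apply, dotProduct]
        rw [e]
        refine (xx_bilin _ _ _).trans ?_
        have e2 : (∑ i, ‖(Pi.single (k, a) 1 : Fin N × ρ → ℂ) i‖ ^ 2) = 1 := by
          rw [Finset.sum_eq_single (k, a)] <;> simp +contextual
        rw [e2, Real.sqrt_one, mul_one]
        have e3 : Real.sqrt (∑ i, ‖E (k, a) i‖ ^ 2) ≤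
            M * Real.sqrt (Fintype.card ρ) * Real.sqrt N := by
          have : (∑ i, ‖E (k, a) i‖ ^ 2) ≤ M ^ 2 * (Fintype.card ρ * N) := by
            refine (Finset.sum_le_sum (g := fun _ => M ^ 2) fun i _ => ?_).trans ?_
            · exact pow_le_pow_left₀ (norm_nonneg _) (hEM _ _) 2
            · simp; apply le_of_eq; ring
          refine (Real.sqrt_le_sqrt this).trans ?_
          rw [Real.sqrt_mul (by positivity), Real.sqrt_mul (by positivity), Real.sqrt_sq hM0,
            mul_assoc]
        calc _ ≤ B * (M * Real.sqrt (Fintype.card ρ) * Real.sqrt N) := by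
              gcongr
              exact xx_resolv_norm hTH hz
          _ = _ := by ring
      · rw [if_neg (not_not.mpr hk)]
        rw [mul_apply]
        rw [Finset.sum_eq_zero]
        · simp
        · rintro ⟨l, b⟩ _
          rw [hE, Matrix.sub_apply, xx_TT_good d D hD0 q hqi h1 N k l a b hk.1 hk.2,
            sub_self, zero_mul]
    rw [trace]
    refine (norm_sum_le _ _).trans ?_
    rw [Fintype.sum_prod_type]
    refine (Finset.sum_le_sum fun k _ => Finset.sum_le_sum fun a _ => hdiag k a).trans ?_
    simp only [Finset.sum_const, Finset.card_univ, nsmul_eq_mul]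
    rw [← Finset.mul_sum, ← Finset.sum_filter, Finset.sum_const, nsmul_eq_mul]
    have hc : (((Finset.univ : Finset (Fin N)).filter
      (fun k : Fin N => ¬ (d ≤ (k : ℕ) ∧ (k : ℕ) + d < N))).card : ℝ) ≤ 2 * d := by
      exact_mod_cast xx_bad_count N d
    calc _ ≤ (Fintype.card ρ : ℝ) * ((2 * d) *
            (B * M * Real.sqrt (Fintype.card ρ) * Real.sqrt N)) := by gcongr
      _ = _ := by ring
  rw [tendsto_iff_norm_sub_tendsto_zero]
  set K := (2 * d * Fintype.card ρ * (B * M * Real.sqrt (Fintype.card ρ))) with hK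
  have hlim : Tendsto (fun N : ℕ => K * (Real.sqrt N)⁻¹) atTop (𝓝 0) := by
    rw [← mul_zero K]
    refine Tendsto.const_mul _ (Tendsto.inv_tendsto_atTop ?_)
    exact Real.tendsto_sqrt_atTop.comp tendsto_natCast_atTop_atTop
  refine tendsto_of_tendsto_of_tendsto_of_le_of_le' tendsto_const_nhds hlim
    (Eventually.of_forall fun _ => norm_nonneg _) ?_
  filter_upwards [eventually_gt_atTop 0] with N hN
  have hN' : (N : ℂ) ≠ 0 := by exact_mod_cast hN.ne'
  have hN'' : (0 : ℝ) < N := by exact_mod_cast hN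
  have e : (N : ℂ)⁻¹ * (resolv (blockToeplitz (trigP d C) N N) z).trace -
      (((2 * π : ℝ) : ℂ)⁻¹ * ∫ θ in (-π : ℝ)..π, (q θ).trace) =
      (N : ℂ)⁻¹ * ((resolv (blockToeplitz (trigP d C) N N) z).trace -
      N * (((2 * π : ℝ) : ℂ)⁻¹ * ∫ θ in (-π : ℝ)..π, (q θ).trace)) := by
    rw [mul_sub, ← mul_assoc (N : ℂ)⁻¹ (N : ℂ), inv_mul_cancel₀ hN', one_mul]
  rw [e, norm_mul, norm_inv, Complex.norm_natCast]
  calc _ ≤ (N : ℝ)⁻¹ * (K * Real.sqrt N) := by gcongr; exact key N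
    _ = K * (Real.sqrt N)⁻¹ := by
      have : (N : ℝ)⁻¹ = (Real.sqrt N)⁻¹ * (Real.sqrt N)⁻¹ := by
        rw [← mul_inv, Real.mul_self_sqrt hN''.le]
      rw [this]
      have : Real.sqrt N ≠ 0 := (Real.sqrt_pos.mpr hN'').ne'
      field_simp

lemma xx_approx {u : ℝ → ℂ} (hu : IntervalIntegrable u volume (-π) π) {ε : ℝ} (hε : 0 < ε) :
    ∃ c : ℤ →₀ ℂ, ∫ θ in (-π : ℝ)..π, ‖u θ - ∑ j ∈ c.support,
      Complex.exp (Complex.I * (j : ℂ) * (θ : ℂ)) * c j‖ ≤ ε := by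
  haveI : Fact (0 < 2 * π) := ⟨by positivity⟩
  have hper : -π + 2 * π = π := by ring
  have hpi : -π ≤ π := by linarith [Real.pi_pos]
  set g : AddCircle (2 * π) → ℂ := AddCircle.liftIoc (2 * π) (-π) u with hg
  have hg1 : MemLp g 1 (AddCircle.haarAddCircle (T := 2 * π)) := by
    apply MemLp.haarAddCircle
    apply MemLp.memLp_liftIoc
    rw [hper, memLp_one_iff_integrable]
    exact (intervalIntegrable_iff_integrableOn_Ioc_of_le hpi).mp hu
  have hmem : hg1.toLp g ∈ (Submodule.span ℂ (Set.range (@fourierLp (2 * π) _ 1 _))).topologicalClosure := by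
    rw [span_fourierLp_closure_eq_top (by simp)]; trivial
  rw [← SetLike.mem_coe, Submodule.topologicalClosure_coe, Metric.mem_closure_iff] at hmem
  obtain ⟨P, hP, hd⟩ := hmem (ε / (2 * π)) (by positivity)
  rw [SetLike.mem_coe, Finsupp.mem_span_range_iff_exists_finsupp] at hP
  obtain ⟨c, rfl⟩ := hP
  refine ⟨c, ?_⟩
  rw [dist_eq_norm, L1.norm_eq_integral_norm] at hd
  have hae : (fun a => ‖(hg1.toLp g - c.sum fun i a => a • (@fourierLp (2 * π) _ 1 _ i) :
      Lp ℂ 1 (AddCircle.haarAddCircle (T := 2 * π))) a‖) =ᵐ[AddCircle.haarAddCircle]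
      fun a => ‖g a - ∑ j ∈ c.support, c j * fourier j a‖ := by
    have h1 := hg1.coeFn_toLp
    have h2 := Lp.coeFn_sub (hg1.toLp g) (c.sum fun i a => a • (@fourierLp (2 * π) _ 1 _ i))
    have h3 : ∀ s : Finset ℤ, (((∑ i ∈ s, c i • (@fourierLp (2 * π) _ 1 _ i) :
        Lp ℂ 1 (AddCircle.haarAddCircle (T := 2 * π)))) : AddCircle (2 * π) → ℂ)
        =ᵐ[AddCircle.haarAddCircle] fun a => ∑ j ∈ s, c j * fourier j a := by
      intro s
      induction s using Finset.induction_on with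
      | empty =>
        simp only [Finset.sum_empty]
        exact Lp.coeFn_zero _ _ _
      | insert i s hi ih =>
        rw [Finset.sum_insert hi]
        filter_upwards [Lp.coeFn_add (c i • (@fourierLp (2 * π) _ 1 _ i))
          (∑ i ∈ s, c i • (@fourierLp (2 * π) _ 1 _ i)), ih, coeFn_fourierLp (T := 2 * π) 1 i,
          Lp.coeFn_smul (c i) (@fourierLp (2 * π) _ 1 _ i)] with a h1 h2 h3 h4
        rw [h1, Pi.add_apply, h2, h4, Pi.smul_apply, h3, Finset.sum_insert hi, smul_eq_mul]
    have h4 := h3 c.support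
    filter_upwards [h1, h2, h4] with a h1 h2 h4
    rw [h2, Pi.sub_apply, h1, Finsupp.sum, h4]
  rw [integral_congr_ae hae, AddCircle.integral_haarAddCircle,
    ← AddCircle.intervalIntegral_preimage (2 * π) (-π), hper, smul_eq_mul] at hd
  rw [intervalIntegral.integral_congr_ae (g := fun θ => ‖u θ - ∑ j ∈ c.support,
      Complex.exp (Complex.I * (j : ℂ) * (θ : ℂ)) * c j‖)] at hd
  · rw [inv_mul_lt_iff₀ (by positivity)] at hd
    have : 2 * π * (ε / (2 * π)) = ε := by field_simp
    linarith
  · refine Eventually.of_forall fun x hx => ?_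
    rw [Set.uIoc_of_le hpi] at hx
    rw [hg, AddCircle.liftIoc_coe_apply (by rwa [hper])]
    congr 2
    refine Finset.sum_congr rfl fun j _ => ?_
    rw [fourier_coe_apply, mul_comm]
    congr 2
    have : (π : ℂ) ≠ 0 := by exact_mod_cast Real.pi_ne_zero
    push_cast
    field_simp

/-- approximation of a Hermitian symbol by Hermitian trigonometric polynomials -/
lemma xx_approx_herm {ρ : Type*} [Fintype ρ] [DecidableEq ρ] (G : ℝ → Matrix ρ ρ ℂ)
    (hG : ∀ a b, IntervalIntegrable (fun θ => G θ a b) volume (-π) π)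
    (hH : ∀ θ ∈ Set.Icc (-π) π, (G θ).IsHermitian) {ε : ℝ} (hε : 0 < ε) :
    ∃ (d : ℕ) (C : ℤ → Matrix ρ ρ ℂ), (∀ j, j ∉ Finset.Icc (-(d : ℤ)) d → C j = 0) ∧
      (∀ θ, (trigP d C θ).IsHermitian) ∧
      ∀ a b, ∫ θ in (-π : ℝ)..π, ‖G θ a b - trigP d C θ a b‖ ≤ ε := by
  have hpi : -π ≤ π := by linarith [Real.pi_pos]
  choose c hc using fun a b => xx_approx (hG a b) hε
  set s : Finset ℤ := Finset.univ.biUnion fun a => Finset.univ.biUnion fun b => (c a b).support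
    with hs
  obtain ⟨d, hd⟩ : ∃ d : ℕ, ∀ j ∈ s, j.natAbs ≤ d := ⟨s.sup Int.natAbs, fun j hj =>
    Finset.le_sup (f := Int.natAbs) hj⟩
  have hsub : ∀ a b, (c a b).support ⊆ Finset.Icc (-(d : ℤ)) d := by
    intro a b j hj
    have := hd j (by simp only [hs, Finset.mem_biUnion]; exact ⟨a, Finset.mem_univ _, b, Finset.mem_univ _, hj⟩)
    rw [Finset.mem_Icc]; omega
  set C0 : ℤ → Matrix ρ ρ ℂ := fun j => Matrix.of fun a b => c a b j with hC0
  have hC00 : ∀ j, j ∉ Finset.Icc (-(d : ℤ)) d → C0 j = 0 := by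
    intro j hj
    ext a b
    simp only [hC0, Matrix.of_apply, Matrix.zero_apply]
    by_contra h
    exact hj (hsub a b (Finsupp.mem_support_iff.mpr h))
  have hc' : ∀ a b, ∫ θ in (-π : ℝ)..π, ‖G θ a b - trigP d C0 θ a b‖ ≤ ε := by
    intro a b
    convert hc a b using 6 with θ
    simp only [trigP, Matrix.of_apply, hC0]
    symm
    apply Finset.sum_subset (hsub a b)
    intro j _ hj
    simp [Finsupp.notMem_support_iff.mp hj]
  have hstar : ∀ θ, (trigP d C0 θ)ᴴ = trigP d (fun j => (C0 (-j))ᴴ) θ := by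
    intro θ
    ext a b
    simp only [trigP, Matrix.of_apply, conjTranspose_apply, star_sum, star_mul']
    refine Finset.sum_nbij' (fun j => -j) (fun j => -j) ?_ ?_ ?_ ?_ ?_
    · intro j hj; simp only [Finset.mem_Icc] at *; omega
    · intro j hj; simp only [Finset.mem_Icc] at *; omega
    · simp
    · simp
    · intro j _
      simp only [neg_neg]
      congr 1
      rw [Complex.star_def, ← Complex.exp_conj]
      simp
  have hlin : ∀ θ, trigP d (fun j => (2⁻¹ : ℂ) • (C0 j + (C0 (-j))ᴴ)) θ =
      (2⁻¹ : ℂ) • (trigP d C0 θ + (trigP d C0 θ)ᴴ) := by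
    intro θ
    rw [hstar]
    ext a b
    simp only [trigP, Matrix.of_apply, Matrix.smul_apply, Matrix.add_apply, smul_eq_mul,
      ← Finset.sum_add_distrib, Finset.mul_sum]
    refine Finset.sum_congr rfl fun j _ => by ring
  refine ⟨d, fun j => (2⁻¹ : ℂ) • (C0 j + (C0 (-j))ᴴ), ?_, ?_, ?_⟩
  · intro j hj
    have : -j ∉ Finset.Icc (-(d : ℤ)) d := by
      simp only [Finset.mem_Icc] at *; omega
    simp [hC00 j hj, hC00 _ this]
  · intro θ
    rw [hlin, Matrix.IsHermitian, conjTranspose_smul, conjTranspose_add, conjTranspose_conjTranspose,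
      add_comm]
    simp
  · intro a b
    have hi : ∀ a b, IntervalIntegrable (fun θ => ‖G θ a b - trigP d C0 θ a b‖) volume (-π) π :=
      fun a b => ((hG a b).sub ((xx_trigP_cont d C0 a b).intervalIntegrable _ _)).norm
    have hi' : IntervalIntegrable (fun θ => ‖G θ a b -
        trigP d (fun j => (2⁻¹ : ℂ) • (C0 j + (C0 (-j))ᴴ)) θ a b‖) volume (-π) π :=
      ((hG a b).sub ((xx_trigP_cont d _ a b).intervalIntegrable _ _)).norm
    calc _ ≤ ∫ θ in (-π : ℝ)..π, (2⁻¹ * ‖G θ a b - trigP d C0 θ a b‖ +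
            2⁻¹ * ‖G θ b a - trigP d C0 θ b a‖) := by
          refine intervalIntegral.integral_mono_on hpi hi'
            (((hi a b).const_mul _).add ((hi b a).const_mul _)) fun θ hθ => ?_
          rw [hlin]
          have e : G θ a b = star (G θ b a) := by
            conv_lhs => rw [← (hH θ hθ).eq]
            rfl
          have e2 : G θ a b - ((2⁻¹ : ℂ) • (trigP d C0 θ + (trigP d C0 θ)ᴴ)) a b =
              2⁻¹ * (G θ a b - trigP d C0 θ a b) + 2⁻¹ * star (G θ b a - trigP d C0 θ b a) := by
            rw [star_sub, ← e]
            simp only [Matrix.smul_apply, Matrix.add_apply, smul_eq_mul, conjTranspose_apply]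
            ring
          rw [e2]
          refine (norm_add_le _ _).trans ?_
          rw [norm_mul, norm_mul, norm_star]
          simp
      _ = 2⁻¹ * (∫ θ in (-π : ℝ)..π, ‖G θ a b - trigP d C0 θ a b‖) +
          2⁻¹ * ∫ θ in (-π : ℝ)..π, ‖G θ b a - trigP d C0 θ b a‖ := by
          rw [intervalIntegral.integral_add ((hi a b).const_mul _) ((hi b a).const_mul _),
            intervalIntegral.integral_const_mul, intervalIntegral.integral_const_mul]
      _ ≤ ε := by linarith [hc' a b, hc' b a]

lemma xx_trace_meas {ρ : Type*} [Fintype ρ] [DecidableEq ρ] (G : ℝ → Matrix ρ ρ ℂ)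
    (hG : ∀ a b, IntervalIntegrable (fun θ => G θ a b) volume (-π) π) (z : ℂ) :
    AEMeasurable (fun θ => (resolv (G θ) z).trace) (volume.restrict (Set.Icc (-π) π)) := by
  have hpi : -π ≤ π := by linarith [Real.pi_pos]
  simp only [trace, diag_apply]
  refine Finset.aemeasurable_fun_sum _ fun a _ => xx_resolv_meas _ (fun a b => ?_) z a a
  exact ((intervalIntegrable_iff_integrableOn_Icc_of_le hpi).mp
    (hG a b)).aestronglyMeasurable.aemeasurable

lemma xx_trace_int {ρ : Type*} [Fintype ρ] [DecidableEq ρ] (G : ℝ → Matrix ρ ρ ℂ)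
    (hG : ∀ a b, IntervalIntegrable (fun θ => G θ a b) volume (-π) π)
    (hH : ∀ θ ∈ Set.Icc (-π) π, (G θ).IsHermitian) {z : ℂ} (hz : z.im ≠ 0) :
    IntervalIntegrable (fun θ => (resolv (G θ) z).trace) volume (-π) π :=
  xx_int_of_bdd' (xx_trace_meas G hG z) (fun θ hθ => xx_resolv_trace_bound (hH θ hθ) hz)

lemma xx_resolv_limit {ρ : Type*} [Fintype ρ] [DecidableEq ρ] (G : ℝ → Matrix ρ ρ ℂ)
    (hG : ∀ a b, IntervalIntegrable (fun θ => G θ a b) volume (-π) π)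
    (hH : ∀ θ ∈ Set.Icc (-π) π, (G θ).IsHermitian) {z : ℂ} (hz : z.im ≠ 0) :
    Tendsto (fun N : ℕ => (N : ℂ)⁻¹ * (resolv (blockToeplitz G N N) z).trace) atTop
      (𝓝 (((2 * π : ℝ) : ℂ)⁻¹ * ∫ θ in (-π : ℝ)..π, (resolv (G θ) z).trace)) := by
  have hpi : -π ≤ π := by linarith [Real.pi_pos]
  rw [Metric.tendsto_atTop]
  intro ε hε
  set B := |z.im|⁻¹ with hB
  have hB0 : 0 ≤ B := by positivity
  set K : ℝ := B * B * ((2 * π)⁻¹ * (Fintype.card ρ * Fintype.card ρ)) with hK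
  have hK0 : 0 ≤ K := by positivity
  set δ : ℝ := ε / (4 * (K + 1)) with hδ
  have hδ0 : 0 < δ := by positivity
  have hKδ : K * δ ≤ ε / 4 := by
    rw [hδ, mul_div_assoc', div_le_div_iff₀ (by positivity) (by norm_num)]
    nlinarith
  obtain ⟨d, C, hC, hCH, happ⟩ := xx_approx_herm G hG hH hδ0
  set g := trigP d C with hg
  have hgi : ∀ a b, IntervalIntegrable (fun θ => g θ a b) volume (-π) π :=
    fun a b => (xx_trigP_cont d C a b).intervalIntegrable _ _
  have hsum : ∑ a, ∑ b, ∫ θ in (-π : ℝ)..π, ‖G θ a b - g θ a b‖ ≤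
      Fintype.card ρ * Fintype.card ρ * δ := by
    refine (Finset.sum_le_sum fun a _ => Finset.sum_le_sum fun b _ => happ a b).trans ?_
    simp [mul_assoc]
  have hIntg : ‖(((2 * π : ℝ) : ℂ)⁻¹ * ∫ θ in (-π : ℝ)..π, (resolv (g θ) z).trace) -
      (((2 * π : ℝ) : ℂ)⁻¹ * ∫ θ in (-π : ℝ)..π, (resolv (G θ) z).trace)‖ ≤ ε / 4 := by
    rw [← mul_sub, ← intervalIntegral.integral_sub (xx_trace_int g hgi (fun θ _ => hCH θ) hz)
      (xx_trace_int G hG hH hz), norm_mul]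
    have e1 : ‖(((2 * π : ℝ) : ℂ))⁻¹‖ = (2 * π)⁻¹ := by
      rw [norm_inv, Complex.norm_real, Real.norm_of_nonneg (by positivity)]
    rw [e1]
    have hdi : ∀ a b, IntervalIntegrable (fun θ => ‖G θ a b - g θ a b‖) volume (-π) π :=
      fun a b => ((hG a b).sub (hgi a b)).norm
    have e2 : ‖∫ θ in (-π : ℝ)..π, ((resolv (g θ) z).trace - (resolv (G θ) z).trace)‖ ≤
        ∫ θ in (-π : ℝ)..π, (B * B) * ∑ a, ∑ b, ‖G θ a b - g θ a b‖ := by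
      refine (intervalIntegral.norm_integral_le_integral_norm hpi).trans ?_
      refine intervalIntegral.integral_mono_on hpi ?_ ?_ ?_
      · exact ((xx_trace_int g hgi (fun θ _ => hCH θ) hz).sub (xx_trace_int G hG hH hz)).norm
      · refine IntervalIntegrable.const_mul ?_ _
        have : IntervalIntegrable (∑ a, ∑ b, fun θ => ‖G θ a b - g θ a b‖) volume (-π) π :=
          IntervalIntegrable.sum _ fun a _ => IntervalIntegrable.sum _ fun b _ => hdi a b
        convert this using 1
        ext θ; simp [Finset.sum_apply]
      · intro θ hθ
        rw [norm_sub_rev]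
        exact xx_pert_pt (hH θ hθ) (hCH θ) hz
    have e3 : (∫ θ in (-π : ℝ)..π, (B * B) * ∑ a, ∑ b, ‖G θ a b - g θ a b‖) =
        (B * B) * ∑ a, ∑ b, ∫ θ in (-π : ℝ)..π, ‖G θ a b - g θ a b‖ := by
      rw [intervalIntegral.integral_const_mul, intervalIntegral.integral_finsetSum]
      · congr 1
        refine Finset.sum_congr rfl fun a _ => ?_
        rw [intervalIntegral.integral_finsetSum fun b _ => hdi a b]
      · intro a _
        have : IntervalIntegrable (∑ b, fun θ => ‖G θ a b - g θ a b‖) volume (-π) π :=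
          IntervalIntegrable.sum _ fun b _ => hdi a b
        convert this using 1
        ext θ; simp [Finset.sum_apply]
    rw [e3] at e2
    calc _ ≤ (2 * π)⁻¹ * ((B * B) * (Fintype.card ρ * Fintype.card ρ * δ)) := by
          gcongr
          exact e2.trans (by gcongr)
      _ = K * δ := by rw [hK]; ring
      _ ≤ _ := hKδ
  have hlim := xx_trig_limit d C hC hCH hz
  rw [Metric.tendsto_atTop] at hlim
  obtain ⟨N0, hN0⟩ := hlim (ε / 4) (by positivity)
  refine ⟨N0 + 1, fun N hN => ?_⟩
  have hNpos : (0 : ℝ) < N := by exact_mod_cast (by omega : 0 < N)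
  have h1 := hN0 N (by omega)
  rw [dist_eq_norm] at h1 ⊢
  have h2 : ‖(N : ℂ)⁻¹ * (resolv (blockToeplitz G N N) z).trace -
      (N : ℂ)⁻¹ * (resolv (blockToeplitz g N N) z).trace‖ ≤ ε / 4 := by
    rw [← mul_sub, norm_mul, norm_inv, Complex.norm_natCast]
    calc _ ≤ (N : ℝ)⁻¹ * ((N * (B * B)) *
          ((2 * π)⁻¹ * (Fintype.card ρ * Fintype.card ρ * δ))) := by
          gcongr
          refine (xx_pert_T G g hG hgi hH (fun θ _ => hCH θ) hz N).trans ?_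
          gcongr
      _ = K * δ := by rw [hK]; field_simp
      _ ≤ _ := hKδ
  set a1 := (N : ℂ)⁻¹ * (resolv (blockToeplitz G N N) z).trace
  set a2 := (N : ℂ)⁻¹ * (resolv (blockToeplitz g N N) z).trace
  set b1 := (((2 * π : ℝ) : ℂ)⁻¹ * ∫ θ in (-π : ℝ)..π, (resolv (G θ) z).trace)
  set b2 := (((2 * π : ℝ) : ℂ)⁻¹ * ∫ θ in (-π : ℝ)..π, (resolv (g θ) z).trace)
  calc ‖a1 - b1‖ = ‖(a1 - a2) + (a2 - b2) + (b2 - b1)‖ := by ring_nf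
    _ ≤ ‖a1 - a2‖ + ‖a2 - b2‖ + ‖b2 - b1‖ := norm_add₃_le
    _ < ε := by linarith

/-- the resolvent function on the one-point compactification of the line -/
def rz (z : ℂ) (hz : z.im ≠ 0) : C(OnePoint ℝ, ℂ) :=
  OnePoint.continuousMapMk ⟨fun x : ℝ => ((x : ℂ) - z)⁻¹, by
    refine Continuous.inv₀ (by fun_prop) fun x => xx_sub_ne hz x⟩ 0 (by
    rw [coclosedCompact_eq_cocompact]
    refine tendsto_inv₀_cobounded.comp ?_
    rw [← Metric.cobounded_eq_cocompact]
    have h1 : Tendsto (fun x : ℝ => (x : ℂ)) (Bornology.cobounded ℝ) (Bornology.cobounded ℂ) := by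
      rw [← tendsto_norm_atTop_iff_cobounded]
      simp only [Complex.norm_real]
      exact tendsto_norm_cobounded_atTop (E := ℝ)
    rw [← tendsto_norm_atTop_iff_cobounded]
    refine tendsto_atTop_mono (f := fun x : ℝ => ‖(x : ℂ)‖ - ‖z‖) (fun x => norm_sub_norm_le _ _) ?_
    exact tendsto_atTop_add_const_right _ _ ((tendsto_norm_atTop_iff_cobounded).mpr h1))

lemma rz_coe (z : ℂ) (hz : z.im ≠ 0) (x : ℝ) : rz z hz (x : OnePoint ℝ) = ((x : ℂ) - z)⁻¹ := rfl
lemma rz_infty (z : ℂ) (hz : z.im ≠ 0) : rz z hz (OnePoint.infty) = 0 := rfl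

lemma rz_norm (z : ℂ) (hz : z.im ≠ 0) : ‖rz z hz‖ ≤ |z.im|⁻¹ := by
  rw [ContinuousMap.norm_le _ (by positivity)]
  intro x
  induction x using OnePoint.rec with
  | infty => rw [rz_infty]; simp
  | coe x => rw [rz_coe]; exact xx_inv_le hz x

lemma rz_mul (z w : ℂ) (hz : z.im ≠ 0) (hw : w.im ≠ 0) :
    rz z hz - rz w hw = (z - w) • (rz z hz * rz w hw) := by
  ext x
  induction x using OnePoint.rec with
  | infty => simp [rz_infty]
  | coe x =>
    simp only [ContinuousMap.sub_apply, ContinuousMap.smul_apply, ContinuousMap.mul_apply, rz_coe,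
      smul_eq_mul]
    have h1 := xx_sub_ne hz x
    have h2 := xx_sub_ne hw x
    field_simp
    ring

lemma rz_star (z : ℂ) (hz : z.im ≠ 0) :
    star (rz z hz) = rz (star z) (by simpa using hz) := by
  ext x
  induction x using OnePoint.rec with
  | infty => simp [rz_infty]
  | coe x => simp [rz_coe]

lemma xx_SW (V : Submodule ℂ C(OnePoint ℝ, ℂ)) (hV : IsClosed (V : Set C(OnePoint ℝ, ℂ)))
    (h1 : (1 : C(OnePoint ℝ, ℂ)) ∈ V) (hr : ∀ z hz, rz z hz ∈ V) (φ : C(OnePoint ℝ, ℂ)) :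
    φ ∈ V := by
  set g : Set C(OnePoint ℝ, ℂ) := insert 1 {ψ | ∃ z hz, ψ = rz z hz} with hg
  set S := Submodule.span ℂ g with hS
  set T := S.topologicalClosure with hT
  have hTV : T ≤ V := by
    refine Submodule.topologicalClosure_minimal _ (Submodule.span_le.mpr ?_) hV
    rintro ψ (rfl | ⟨z, hz, rfl⟩)
    · exact h1
    · exact hr z hz
  have hTc : IsClosed (T : Set C(OnePoint ℝ, ℂ)) := Submodule.isClosed_topologicalClosure _
  have hST : S ≤ T := Submodule.le_topologicalClosure _
  have hgT : ∀ ψ ∈ g, ψ ∈ T := fun ψ hψ => hST (Submodule.subset_span hψ)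
  have hrT : ∀ z hz, rz z hz ∈ T := fun z hz => hgT _ (Or.inr ⟨z, hz, rfl⟩)
  have h1T : (1 : C(OnePoint ℝ, ℂ)) ∈ T := hgT _ (Or.inl rfl)
  have hne : ∀ z w hz hw, z ≠ w → rz z hz * rz w hw ∈ T := by
    intro z w hz hw hzw
    have : rz z hz * rz w hw = (z - w)⁻¹ • (rz z hz - rz w hw) := by
      rw [rz_mul, smul_smul, inv_mul_cancel₀ (sub_ne_zero.mpr hzw), one_smul]
    rw [this]
    exact T.smul_mem _ (T.sub_mem (hrT _ _) (hrT _ _))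
  have hmulr : ∀ z w hz hw, rz z hz * rz w hw ∈ T := by
    intro z w hz hw
    by_cases hzw : z = w
    · subst hzw
      refine hTc.closure_subset_iff.mpr (Set.Subset.refl _) ?_
      rw [Metric.mem_closure_iff]
      intro ε hε
      set B := |z.im|⁻¹ with hB
      have hz0 : 0 < |z.im| := abs_pos.mpr hz
      have hB0 : 0 < B := by positivity
      obtain ⟨δ, hδ0, hδ⟩ : ∃ δ : ℝ, 0 < δ ∧ B * (δ * |z.im| * (B * B)) < ε := by
        refine ⟨ε / (2 * (B * (|z.im| * (B * B)))), by positivity, ?_⟩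
        have : B * (ε / (2 * (B * (|z.im| * (B * B)))) * |z.im| * (B * B)) = ε / 2 := by
          field_simp
        rw [this]; linarith
      set w : ℂ := z + ((δ * z.im : ℝ) : ℂ) * Complex.I with hw'
      have hwim : w.im = (1 + δ) * z.im := by
        simp [hw']; ring
      have hw0 : w.im ≠ 0 := by rw [hwim]; exact mul_ne_zero (by positivity) hz
      have hzw : z - w = -(((δ * z.im : ℝ) : ℂ) * Complex.I) := by rw [hw']; ring
      have hwn : ‖rz w hw0‖ ≤ B := by
        refine (rz_norm _ _).trans ?_
        rw [hwim, abs_mul, abs_of_pos (by positivity : 0 < 1 + δ)]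
        rw [hB]
        apply inv_anti₀ hz0
        nlinarith
      refine ⟨_, hne z w hz hw0 ?_, ?_⟩
      · intro h
        rw [h, sub_self] at hzw
        have := congrArg norm hzw
        simp [hδ0.ne'] at this
        exact hw0 this
      · rw [dist_eq_norm, ← mul_sub, rz_mul]
        refine lt_of_le_of_lt ?_ hδ
        refine (norm_mul_le _ _).trans ?_
        rw [norm_smul]
        have h3 : ‖z - w‖ = δ * |z.im| := by
          rw [hzw, norm_neg, norm_mul, Complex.norm_I, mul_one, Complex.norm_real, norm_mul,
            Real.norm_of_nonneg hδ0.le, Real.norm_eq_abs]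
        rw [h3]
        have h4 := norm_mul_le (rz z hz) (rz w hw0)
        have h5 := rz_norm z hz
        gcongr
        exact h4.trans (by gcongr)
    · exact hne z w hz hw hzw
  have hmulS : ∀ x ∈ S, ∀ y ∈ S, x * y ∈ T := by
    intro x hx y hy
    induction hx, hy using Submodule.span_induction₂ with
    | mem_mem x y hx hy =>
      rcases hx with rfl | ⟨z, hz, rfl⟩
      · rw [one_mul]; exact hgT _ hy
      · rcases hy with rfl | ⟨w, hw, rfl⟩
        · rw [mul_one]; exact hrT _ _
        · exact hmulr _ _ _ _
    | zero_left y hy => simp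
    | zero_right x hx => simp
    | add_left x y z hx hy hz h1 h2 => rw [add_mul]; exact T.add_mem h1 h2
    | add_right x y z hx hy hz h1 h2 => rw [mul_add]; exact T.add_mem h1 h2
    | smul_left r x y hx hy h => rw [smul_mul_assoc]; exact T.smul_mem _ h
    | smul_right r x y hx hy h => rw [mul_smul_comm]; exact T.smul_mem _ h
  have hmulT : ∀ x y, x ∈ T → y ∈ T → x * y ∈ T := by
    intro x y hx hy
    have := map_mem_closure₂ (continuous_mul (M := C(OnePoint ℝ, ℂ))) (s := (S : Set _))
      (t := (S : Set _)) (u := (T : Set _)) hx hy (fun a ha b hb => hmulS a ha b hb)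
    rwa [hTc.closure_eq] at this
  have hstarS : ∀ x ∈ S, star x ∈ T := by
    intro x hx
    induction hx using Submodule.span_induction with
    | mem x hx =>
      rcases hx with rfl | ⟨z, hz, rfl⟩
      · rw [star_one]; exact h1T
      · rw [rz_star]; exact hrT _ _
    | zero => simp
    | add x y _ _ h1 h2 => rw [star_add]; exact T.add_mem h1 h2
    | smul r x _ h => rw [star_smul]; exact T.smul_mem _ h
  have hstarT : ∀ x, x ∈ T → star x ∈ T := by
    intro x hx
    have := map_mem_closure (continuous_star (R := C(OnePoint ℝ, ℂ))) (s := (S : Set _))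
      (t := (T : Set _)) hx (fun a ha => hstarS a ha)
    rwa [hTc.closure_eq] at this
  let A : StarSubalgebra ℂ C(OnePoint ℝ, ℂ) :=
    { T.toSubalgebra h1T hmulT with star_mem' := fun {x} hx => hstarT x hx }
  have hAT : (A : Set C(OnePoint ℝ, ℂ)) = T := rfl
  have hsep : A.SeparatesPoints := by
    intro x y hxy
    have hI0 : Complex.I.im ≠ 0 := by simp
    refine ⟨_, ⟨rz Complex.I hI0, hrT _ _, rfl⟩, ?_⟩
    change rz Complex.I hI0 x ≠ rz Complex.I hI0 y
    have hI : ∀ x : ℝ, ((x : ℂ) - Complex.I) ≠ 0 := fun x => xx_sub_ne (by simp) x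
    induction x using OnePoint.rec with
    | infty =>
      induction y using OnePoint.rec with
      | infty => exact absurd rfl hxy
      | coe y =>
        intro h
        rw [rz_infty, rz_coe] at h
        exact inv_ne_zero (hI y) h.symm
    | coe x =>
      induction y using OnePoint.rec with
      | infty =>
        intro h
        rw [rz_infty, rz_coe] at h
        exact inv_ne_zero (hI x) h
      | coe y =>
        intro h
        rw [rz_coe, rz_coe] at h
        apply hxy
        have := inv_injective h
        have : (x : ℂ) = y := by simpa using this
        have : x = y := by exact_mod_cast this
        rw [this]
  have htop := ContinuousMap.starSubalgebra_topologicalClosure_eq_top_of_separatesPoints A hsep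
  have hφ : φ ∈ A.topologicalClosure := by rw [htop]; trivial
  have hφ' : φ ∈ closure (A : Set C(OnePoint ℝ, ℂ)) := hφ
  rw [hAT, hTc.closure_eq] at hφ'
  exact hTV hφ'

/-- eigenvalue sum of a function on the one-point compactification -/
def es {m : Type*} [Fintype m] [DecidableEq m] (φ : C(OnePoint ℝ, ℂ)) (A : Matrix m m ℂ) : ℂ :=
  eigSum (fun z => φ ((z.re : ℝ) : OnePoint ℝ)) A

lemma es_add {m : Type*} [Fintype m] [DecidableEq m] (φ ψ : C(OnePoint ℝ, ℂ)) (A : Matrix m m ℂ) :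
    es (φ + ψ) A = es φ A + es ψ A := by
  simp [es, eigSum, Multiset.sum_map_add]

lemma es_zero {m : Type*} [Fintype m] [DecidableEq m] (A : Matrix m m ℂ) : es 0 A = 0 := by
  simp [es, eigSum]

lemma es_smul {m : Type*} [Fintype m] [DecidableEq m] (c : ℂ) (φ : C(OnePoint ℝ, ℂ))
    (A : Matrix m m ℂ) : es (c • φ) A = c * es φ A := by
  simp [es, eigSum, Multiset.sum_map_mul_left]

lemma es_sub {m : Type*} [Fintype m] [DecidableEq m] (φ ψ : C(OnePoint ℝ, ℂ)) (A : Matrix m m ℂ) :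
    es (φ - ψ) A = es φ A - es ψ A := by
  have := es_add (φ - ψ) ψ A
  rw [sub_add_cancel] at this
  rw [this]; ring

lemma es_herm {m : Type*} [Fintype m] [DecidableEq m] (φ : C(OnePoint ℝ, ℂ)) {A : Matrix m m ℂ}
    (hA : A.IsHermitian) : es φ A = ∑ i, φ ((hA.eigenvalues i : ℝ) : OnePoint ℝ) := by
  rw [es, xx_eigSum hA]
  simp

lemma es_bound {m : Type*} [Fintype m] [DecidableEq m] (φ : C(OnePoint ℝ, ℂ)) {A : Matrix m m ℂ}
    (hA : A.IsHermitian) : ‖es φ A‖ ≤ Fintype.card m * ‖φ‖ := by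
  rw [es_herm φ hA]
  refine (norm_sum_le _ _).trans ?_
  refine (Finset.sum_le_sum fun i _ => φ.norm_coe_le_norm _).trans ?_
  simp

lemma es_rz {m : Type*} [Fintype m] [DecidableEq m] (z : ℂ) (hz : z.im ≠ 0) {A : Matrix m m ℂ}
    (hA : A.IsHermitian) : es (rz z hz) A = (resolv A z).trace := by
  rw [es_herm _ hA, xx_resolv_trace hA hz]
  rfl

lemma es_one {m : Type*} [Fintype m] [DecidableEq m] {A : Matrix m m ℂ}
    (hA : A.IsHermitian) : es 1 A = Fintype.card m := by
  rw [es_herm _ hA]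
  simp

section
variable {ρ : Type*} [Fintype ρ] [DecidableEq ρ] (G : ℝ → Matrix ρ ρ ℂ)
    (hG : ∀ a b, IntervalIntegrable (fun θ => G θ a b) volume (-π) π)
    (hH : ∀ θ ∈ Set.Icc (-π) π, (G θ).IsHermitian)

lemma es_int (hH : ∀ θ ∈ Set.Icc (-π) π, (G θ).IsHermitian) {φ : C(OnePoint ℝ, ℂ)}
    (h : AEMeasurable (fun θ => es φ (G θ)) (volume.restrict (Set.Icc (-π) π))) :
    IntervalIntegrable (fun θ => es φ (G θ)) volume (-π) π :=
  xx_int_of_bdd' h (fun θ hθ => es_bound φ (hH θ hθ))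

/-- the space of good test functions -/
def goodW (hH : ∀ θ ∈ Set.Icc (-π) π, (G θ).IsHermitian) : Submodule ℂ C(OnePoint ℝ, ℂ) where
  carrier := {φ | AEMeasurable (fun θ => es φ (G θ)) (volume.restrict (Set.Icc (-π) π)) ∧
    Tendsto (fun N : ℕ => (N : ℂ)⁻¹ * es φ (blockToeplitz G N N)) atTop
      (𝓝 (((2 * π : ℝ) : ℂ)⁻¹ * ∫ θ in (-π : ℝ)..π, es φ (G θ)))}
  add_mem' := by
    rintro φ ψ ⟨h1, h2⟩ ⟨h3, h4⟩
    refine ⟨?_, ?_⟩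
    · simp only [es_add]; exact h1.add h3
    · simp only [es_add, mul_add]
      rw [intervalIntegral.integral_add (es_int G hH h1) (es_int G hH h3), mul_add]
      exact h2.add h4
  zero_mem' := by
    refine ⟨?_, ?_⟩
    · simp only [es_zero]; exact aemeasurable_const
    · simp only [es_zero]; simp
  smul_mem' := by
    rintro c φ ⟨h1, h2⟩
    refine ⟨?_, ?_⟩
    · simp only [es_smul]; exact h1.const_mul c
    · simp only [es_smul]
      rw [intervalIntegral.integral_const_mul]
      convert h2.const_mul c using 2 <;> ring

lemma goodW_closed (hH : ∀ θ ∈ Set.Icc (-π) π, (G θ).IsHermitian) :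
    IsClosed (goodW G hH : Set C(OnePoint ℝ, ℂ)) := by
  have hpi : -π ≤ π := by linarith [Real.pi_pos]
  rw [isClosed_iff_clusterPt]
  intro φ hφ
  rw [← mem_closure_iff_clusterPt, mem_closure_iff_seq_limit] at hφ
  obtain ⟨x, hx, hlim⟩ := hφ
  have hnorm : Tendsto (fun n => ‖x n - φ‖) atTop (𝓝 0) :=
    tendsto_iff_norm_sub_tendsto_zero.mp hlim
  have hm : AEMeasurable (fun θ => es φ (G θ)) (volume.restrict (Set.Icc (-π) π)) := by
    refine aemeasurable_of_tendsto_metrizable_ae' (f := fun n θ => es (x n) (G θ))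
      (fun n => (hx n).1) ?_
    refine ae_restrict_of_forall_mem measurableSet_Icc fun θ hθ => ?_
    rw [tendsto_iff_norm_sub_tendsto_zero]
    refine squeeze_zero (fun _ => norm_nonneg _) (g := fun n => Fintype.card ρ * ‖x n - φ‖) ?_ ?_
    · intro n
      rw [← es_sub]
      exact es_bound _ (hH θ hθ)
    · simpa using hnorm.const_mul (Fintype.card ρ : ℝ)
  refine ⟨hm, ?_⟩
  rw [Metric.tendsto_atTop]
  intro ε hε
  set K : ℝ := (Fintype.card ρ : ℝ) with hK
  have hK0 : 0 ≤ K := by positivity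
  have hKn : Tendsto (fun n => K * ‖x n - φ‖) atTop (𝓝 0) := by
    simpa using hnorm.const_mul K
  obtain ⟨n, hn⟩ := (hKn.eventually (gt_mem_nhds (show (0 : ℝ) < ε / 3 by positivity))).exists
  set ψ := x n with hψ
  have h1 : ∀ N : ℕ, ‖(N : ℂ)⁻¹ * es φ (blockToeplitz G N N) -
      (N : ℂ)⁻¹ * es ψ (blockToeplitz G N N)‖ ≤ K * ‖ψ - φ‖ := by
    intro N
    rw [← mul_sub, ← es_sub, norm_mul, norm_inv, Complex.norm_natCast, norm_sub_rev ψ φ]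
    have := es_bound (φ - ψ) (xx_T_herm G hH N)
    rcases Nat.eq_zero_or_pos N with rfl | hN
    · simp; positivity
    · have hN' : (0 : ℝ) < N := by exact_mod_cast hN
      rw [inv_mul_le_iff₀ hN']
      refine this.trans (le_of_eq ?_)
      simp [hK, mul_assoc]
  have h2 : ‖(((2 * π : ℝ) : ℂ)⁻¹ * ∫ θ in (-π : ℝ)..π, es ψ (G θ)) -
      ((2 * π : ℝ) : ℂ)⁻¹ * ∫ θ in (-π : ℝ)..π, es φ (G θ)‖ ≤ K * ‖ψ - φ‖ := by
    rw [← mul_sub, ← intervalIntegral.integral_sub (es_int G hH (hx n).1) (es_int G hH hm), norm_mul]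
    have e1 : ‖(((2 * π : ℝ) : ℂ))⁻¹‖ = (2 * π)⁻¹ := by
      rw [norm_inv, Complex.norm_real, Real.norm_of_nonneg (by positivity)]
    rw [e1, inv_mul_le_iff₀ (by positivity)]
    have := intervalIntegral.norm_integral_le_of_norm_le_const (a := -π) (b := π)
      (f := fun θ => es ψ (G θ) - es φ (G θ)) (C := K * ‖ψ - φ‖) (by
        intro θ hθ
        rw [Set.uIoc_of_le hpi] at hθ
        rw [← es_sub]
        exact es_bound _ (hH θ ⟨hθ.1.le, hθ.2⟩))
    refine this.trans (le_of_eq ?_)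
    rw [abs_of_nonneg (by linarith)]
    ring
  have h3 := (hx n).2
  rw [Metric.tendsto_atTop] at h3
  obtain ⟨N0, hN0⟩ := h3 (ε / 3) (by positivity)
  refine ⟨N0, fun N hN => ?_⟩
  have h4 := hN0 N hN
  have h5 := h1 N
  rw [dist_eq_norm] at h4 ⊢
  change ‖(N : ℂ)⁻¹ * es ψ (blockToeplitz G N N) -
    (((2 * π : ℝ) : ℂ)⁻¹ * ∫ θ in (-π : ℝ)..π, es ψ (G θ))‖ < ε / 3 at h4
  set a1 := (N : ℂ)⁻¹ * es φ (blockToeplitz G N N)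
  set a2 := (N : ℂ)⁻¹ * es ψ (blockToeplitz G N N)
  set b1 := (((2 * π : ℝ) : ℂ)⁻¹ * ∫ θ in (-π : ℝ)..π, es φ (G θ))
  set b2 := (((2 * π : ℝ) : ℂ)⁻¹ * ∫ θ in (-π : ℝ)..π, es ψ (G θ))
  calc ‖a1 - b1‖ = ‖(a1 - a2) + (a2 - b2) + (b2 - b1)‖ := by ring_nf
    _ ≤ ‖a1 - a2‖ + ‖a2 - b2‖ + ‖b2 - b1‖ := norm_add₃_le
    _ < ε := by linarith

lemma goodW_all (hG : ∀ a b, IntervalIntegrable (fun θ => G θ a b) volume (-π) π)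
    (hH : ∀ θ ∈ Set.Icc (-π) π, (G θ).IsHermitian) (φ : C(OnePoint ℝ, ℂ)) :
    φ ∈ goodW G hH := by
  have hpi : -π ≤ π := by linarith [Real.pi_pos]
  refine xx_SW _ (goodW_closed G hH) ?_ ?_ φ
  · refine ⟨?_, ?_⟩
    · refine (aemeasurable_const (b := (Fintype.card ρ : ℂ))).congr ?_
      refine ae_restrict_of_forall_mem measurableSet_Icc fun θ hθ => ?_
      exact (es_one (hH θ hθ)).symm
    · have e : (((2 * π : ℝ) : ℂ)⁻¹ * ∫ θ in (-π : ℝ)..π, es 1 (G θ)) = Fintype.card ρ := by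
        rw [intervalIntegral.integral_congr (g := fun _ => (Fintype.card ρ : ℂ))]
        · have : (π : ℂ) ≠ 0 := by exact_mod_cast Real.pi_ne_zero
          simp
          field_simp
          ring
        · intro θ hθ
          rw [Set.uIcc_of_le hpi] at hθ
          exact es_one (hH θ hθ)
      rw [e]
      refine tendsto_const_nhds.congr' ?_
      filter_upwards [eventually_gt_atTop 0] with N hN
      have hN' : (N : ℂ) ≠ 0 := by exact_mod_cast hN.ne'
      rw [es_one (xx_T_herm G hH N)]
      simp
      field_simp
  · intro z hz
    refine ⟨?_, ?_⟩
    · refine (xx_trace_meas G hG z).congr ?_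
      refine ae_restrict_of_forall_mem measurableSet_Icc fun θ hθ => ?_
      exact (es_rz z hz (hH θ hθ)).symm
    · have := xx_resolv_limit G hG hH hz
      rw [intervalIntegral.integral_congr (g := fun θ => es (rz z hz) (G θ))] at this
      · refine this.congr fun N => ?_
        rw [es_rz z hz (xx_T_herm G hH N)]
      · intro θ hθ
        rw [Set.uIcc_of_le hpi] at hθ
        exact (es_rz z hz (hH θ hθ)).symm

/-- Main eigenvalue distribution theorem -/
lemma xx_main (hG : ∀ a b, IntervalIntegrable (fun θ => G θ a b) volume (-π) π)
    (hH : ∀ θ ∈ Set.Icc (-π) π, (G θ).IsHermitian) (F : ℝ → ℂ) (hF : Continuous F)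
    (hFc : HasCompactSupport F) :
    IntegrableOn (fun θ => eigSum (fun z => F z.re) (G θ)) (Set.Icc (-π) π) ∧
    Tendsto (fun N : ℕ => (N : ℂ)⁻¹ * eigSum (fun z => F z.re) (blockToeplitz G N N)) atTop
      (𝓝 (((2 * π : ℝ) : ℂ)⁻¹ * ∫ θ in Set.Icc (-π) π, eigSum (fun z => F z.re) (G θ))) := by
  have hpi : -π ≤ π := by linarith [Real.pi_pos]
  set φ : C(OnePoint ℝ, ℂ) := OnePoint.continuousMapMk ⟨F, hF⟩ 0 (by
    rw [coclosedCompact_eq_cocompact]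
    exact hFc.is_zero_at_infty) with hφ
  obtain ⟨h1, h2⟩ := goodW_all G hG hH φ
  refine ⟨xx_int_of_bdd h1 (fun θ hθ => es_bound φ (hH θ hθ)), ?_⟩
  rw [integral_Icc_eq_integral_Ioc, ← intervalIntegral.integral_of_le hpi]
  exact h2

end

/-- Hermitian dilation -/
def dil {m n : Type*} (A : Matrix m n ℂ) : Matrix (m ⊕ n) (m ⊕ n) ℂ := fromBlocks 0 A Aᴴ 0

lemma dil_herm {m n : Type*} (A : Matrix m n ℂ) : (dil A).IsHermitian := by
  rw [dil, Matrix.IsHermitian, fromBlocks_conjTranspose]; simp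

open Polynomial in
lemma dil_charpoly {m n : Type*} [Fintype m] [Fintype n] [DecidableEq m] [DecidableEq n]
    (A : Matrix m n ℂ) : (dil A).charpoly * X ^ Fintype.card m =
      (expand ℂ 2 (A * Aᴴ).charpoly) * X ^ Fintype.card n := by
  have h1 : charmatrix (dil A) * fromBlocks (Matrix.scalar m (X : ℂ[X])) 0 (Aᴴ.map C) 1 =
      fromBlocks ((charmatrix (A * Aᴴ)).map (expand ℂ 2)) (-A.map C) 0 (Matrix.scalar n X) := by
    rw [dil, charmatrix_fromBlocks, fromBlocks_multiply]
    congr 1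
    · rw [charmatrix, charmatrix]
      ext i j
      by_cases hij : i = j
      · subst hij
        simp [Matrix.mul_apply, sub_eq_add_neg, pow_two]
      · simp [Matrix.mul_apply, hij]
    · simp
    · ext i j
      simp [charmatrix]
    · simp [charmatrix]
  have h2 := congrArg Matrix.det h1
  rw [det_mul, det_fromBlocks_zero₁₂, det_fromBlocks_zero₂₁] at h2
  rw [Matrix.charpoly, Matrix.charpoly]
  have h3 : expand ℂ 2 (charmatrix (A * Aᴴ)).det = ((charmatrix (A * Aᴴ)).map (expand ℂ 2)).det := by
    exact AlgHom.map_det _ _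
  rw [h3]
  simpa using h2

open scoped ComplexOrder in
lemma dil_eigSum {m n : Type*} [Fintype m] [Fintype n] [DecidableEq m] [DecidableEq n]
    (A : Matrix m n ℂ) (F : ℝ → ℂ) :
    eigSum (fun z => F |z.re|) (dil A) + Fintype.card m * F 0 =
      2 * (∑ i, F (Real.sqrt ((Matrix.isHermitian_mul_conjTranspose_self A).eigenvalues i))) +
        Fintype.card n * F 0 := by
  set hA := Matrix.isHermitian_mul_conjTranspose_self A with hhA
  have hnn : ∀ i, 0 ≤ hA.eigenvalues i := fun i =>
    (Matrix.posSemidef_self_mul_conjTranspose A).eigenvalues_nonneg i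
  have hx : (Polynomial.expand ℂ 2 (A * Aᴴ).charpoly) =
      ∏ i, ((Polynomial.X - Polynomial.C ((Real.sqrt (hA.eigenvalues i) : ℝ) : ℂ)) *
        (Polynomial.X - Polynomial.C (-((Real.sqrt (hA.eigenvalues i) : ℝ) : ℂ)))) := by
    rw [hA.charpoly_eq, map_prod]
    refine Finset.prod_congr rfl fun i _ => ?_
    have : ((hA.eigenvalues i : ℝ) : ℂ) = ((Real.sqrt (hA.eigenvalues i) : ℝ) : ℂ) *
        ((Real.sqrt (hA.eigenvalues i) : ℝ) : ℂ) := by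
      rw [← Complex.ofReal_mul, Real.mul_self_sqrt (hnn i)]
    simp only [map_sub, Polynomial.expand_X, Polynomial.expand_C, map_neg]
    change _ - Polynomial.C ((hA.eigenvalues i : ℝ) : ℂ) = _
    rw [this, map_mul]
    ring
  have hne : ∏ i, ((Polynomial.X - Polynomial.C ((Real.sqrt (hA.eigenvalues i) : ℝ) : ℂ)) *
        (Polynomial.X - Polynomial.C (-((Real.sqrt (hA.eigenvalues i) : ℝ) : ℂ)))) ≠ 0 :=
    Finset.prod_ne_zero_iff.mpr fun i _ =>
      mul_ne_zero (Polynomial.X_sub_C_ne_zero _) (Polynomial.X_sub_C_ne_zero _)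
  have h := congrArg Polynomial.roots (dil_charpoly A)
  rw [hx, Polynomial.roots_mul, Polynomial.roots_mul, Polynomial.roots_prod _ _ hne,
    Polynomial.roots_X_pow, Polynomial.roots_X_pow] at h
  · have h2 := congrArg (fun s => (s.map (fun z : ℂ => F |z.re|)).sum) h
    simp only [Multiset.map_add, Multiset.sum_add, Multiset.map_nsmul, Multiset.sum_nsmul,
      Multiset.map_singleton, Multiset.sum_singleton, Complex.zero_re, abs_zero, nsmul_eq_mul,
      Multiset.map_bind, Multiset.sum_bind] at h2
    rw [eigSum, h2]
    congr 1
    rw [Finset.mul_sum]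
    change Finset.sum _ _ = _
    refine Finset.sum_congr rfl fun i _ => ?_
    rw [Polynomial.roots_mul (mul_ne_zero (Polynomial.X_sub_C_ne_zero _)
      (Polynomial.X_sub_C_ne_zero _)), Polynomial.roots_X_sub_C, Polynomial.roots_X_sub_C]
    simp [abs_of_nonneg (Real.sqrt_nonneg _)]
    ring
  · exact mul_ne_zero hne (pow_ne_zero _ Polynomial.X_ne_zero)
  · exact mul_ne_zero (Matrix.charpoly_monic _).ne_zero (pow_ne_zero _ Polynomial.X_ne_zero)

lemma dil_svSum {m n : Type*} [Fintype m] [Fintype n] [DecidableEq m] [DecidableEq n]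
    (A : Matrix m n ℂ) (F : ℝ → ℂ) :
    2 * svSum F A = eigSum (fun z => F |z.re|) (dil A) +
      (2 * ((min (Fintype.card m) (Fintype.card n) : ℕ) : ℂ) - Fintype.card m - Fintype.card n) *
        F 0 := by
  have h := dil_eigSum A F
  rw [svSum, Nat.cast_sub (min_le_left _ _), mul_sub]
  linear_combination -h

lemma xx_eigSum_reindex {m n : Type*} [Fintype m] [Fintype n] [DecidableEq m] [DecidableEq n]
    (e : m ≃ n) (A : Matrix m m ℂ) (B : Matrix n n ℂ) (h : ∀ i j, A i j = B (e i) (e j))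
    (F : ℂ → ℂ) : eigSum F A = eigSum F B := by
  have : B = Matrix.reindex e e A := by
    ext i j; simp [h]
  rw [eigSum, eigSum, this, Matrix.charpoly_reindex]

lemma xx_perm (ν s t : ℕ) (f : Fin ν → Fin ν → ℝ → Matrix (Fin s) (Fin t) ℂ) (N : ℕ) :
    permPi ν N s * blockMatEq ν s t f N * (permPi ν N t)ᵀ = toeplitzOfBlockSymbol ν s t f N := by
  have hP : ∀ (μ : ℕ) (k : Fin N) (i : Fin ν) (a : Fin μ) (q : (Fin ν × Fin N) × Fin μ),
      permPi ν N μ ((k, i), a) q = if q = ((i, k), a) then 1 else 0 := by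
    rintro μ k i a ⟨⟨j, l⟩, b⟩
    simp only [permPi, kroneckerMap_apply, Matrix.of_apply, Matrix.one_apply, Prod.mk.injEq]
    by_cases h1 : i = j
    · by_cases h2 : k = l
      · by_cases h3 : a = b
        · simp [h1, h2, h3]
        · simp [h1, h2, h3, Ne.symm h3]
      · simp [h1, h2, Ne.symm h2]
    · simp [h1, Ne.symm h1]
  ext ⟨⟨k, i⟩, a⟩ ⟨⟨l, j⟩, b⟩
  simp only [Matrix.mul_apply, Matrix.transpose_apply, hP]
  simp [blockMatEq, toeplitzOfBlockSymbol]

lemma xx_abs_support {F : ℝ → ℂ} (hF : HasCompactSupport F) :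
    HasCompactSupport (fun x => F |x|) := by
  obtain ⟨R, hR⟩ := (hF.isCompact.isBounded).subset_closedBall 0
  refine HasCompactSupport.intro (isCompact_Icc (a := -R) (b := R)) fun x hx => ?_
  apply image_eq_zero_of_notMem_tsupport
  intro h
  have := hR h
  rw [Metric.mem_closedBall, dist_zero_right, Real.norm_eq_abs, abs_abs] at this
  exact hx (abs_le.mp this)

/-- index equivalence -/
def idxE (ν N s : ℕ) : (Fin ν × Fin N) × Fin s ≃ Fin N × (Fin ν × Fin s) where
  toFun p := (p.1.2, (p.1.1, p.2))
  invFun p := ((p.2.1, p.1), p.2.2)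
  left_inv _ := rfl
  right_inv _ := rfl

/-- index equivalence for dilations -/
def idxD (ν N s t : ℕ) : ((Fin ν × Fin N) × Fin s) ⊕ ((Fin ν × Fin N) × Fin t) ≃
    Fin N × ((Fin ν × Fin s) ⊕ (Fin ν × Fin t)) :=
  (Equiv.sumCongr (idxE ν N s) (idxE ν N t)).trans (Equiv.prodSumDistrib _ _ _).symm

lemma xx_dil_T (ν s t : ℕ) (f : Fin ν → Fin ν → ℝ → Matrix (Fin s) (Fin t) ℂ) (N : ℕ)
    (F : ℂ → ℂ) : eigSum F (dil (blockMatEq ν s t f N)) =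
      eigSum F (blockToeplitz (fun θ => dil (blockSymbol ν s t f θ)) N N) := by
  have h0 : ∀ k : ℤ, fc (fun _ => (0 : ℂ)) k = 0 := by intro k; simp [fc]
  refine xx_eigSum_reindex (idxD ν N s t) _ _ ?_ F
  rintro (⟨⟨i, k⟩, a⟩ | ⟨⟨i, k⟩, a⟩) (⟨⟨j, l⟩, b⟩ | ⟨⟨j, l⟩, b⟩)
  · change (0 : ℂ) = blockToeplitz (fun θ => dil (blockSymbol ν s t f θ)) N N
      (k, Sum.inl (i, a)) (l, Sum.inl (j, b))
    rw [xx_T_apply]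
    exact (h0 _).symm
  · change _ = blockToeplitz (fun θ => dil (blockSymbol ν s t f θ)) N N
      (k, Sum.inl (i, a)) (l, Sum.inr (j, b))
    rw [xx_T_apply]
    rfl
  · change star (fc (fun θ => f j i θ b a) (((l : ℕ) : ℤ) - ((k : ℕ) : ℤ))) =
      blockToeplitz (fun θ => dil (blockSymbol ν s t f θ)) N N
      (k, Sum.inr (i, a)) (l, Sum.inl (j, b))
    rw [xx_T_apply, xx_fc_conj, neg_sub]
    rfl
  · change (0 : ℂ) = blockToeplitz (fun θ => dil (blockSymbol ν s t f θ)) N N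
      (k, Sum.inr (i, a)) (l, Sum.inr (j, b))
    rw [xx_T_apply]
    exact (h0 _).symm

lemma xx_star_int {u : ℝ → ℂ} (hu : IntervalIntegrable u volume (-π) π) :
    IntervalIntegrable (fun θ => star (u θ)) volume (-π) π := by
  have hpi : -π ≤ π := by linarith [Real.pi_pos]
  rw [intervalIntegrable_iff_integrableOn_Ioc_of_le hpi] at *
  exact (Complex.conjCLE.toContinuousLinearMap.integrable_comp hu)

lemma xx_vol : (volume (Set.Icc (-π) π)).toReal = 2 * π := by
  rw [Real.volume_Icc, ENNReal.toReal_ofReal (by linarith [Real.pi_pos])]; ring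

lemma xx_SV (ν s t : ℕ) (hν : 2 ≤ ν) (hs : 0 < s) (ht : 0 < t)
    (f : Fin ν → Fin ν → ℝ → Matrix (Fin s) (Fin t) ℂ)
    (hf : ∀ i j a b, IntervalIntegrable (fun θ => f i j θ a b) volume (-π) π) :
    DistributedSV (Set.Icc (-π) π) (blockSymbol ν s t f)
      (fun N => blockMatEq ν s t f N) := by
  intro F hFc hFs
  set G : ℝ → Matrix ((Fin ν × Fin s) ⊕ (Fin ν × Fin t)) ((Fin ν × Fin s) ⊕ (Fin ν × Fin t)) ℂ :=
    fun θ => dil (blockSymbol ν s t f θ) with hGdef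
  have hG : ∀ a b, IntervalIntegrable (fun θ => G θ a b) volume (-π) π := by
    rintro (⟨i, a⟩ | ⟨i, a⟩) (⟨j, b⟩ | ⟨j, b⟩)
    · exact (intervalIntegrable_const (c := (0 : ℂ)))
    · exact hf i j a b
    · exact xx_star_int (hf j i b a)
    · exact (intervalIntegrable_const (c := (0 : ℂ)))
  obtain ⟨hI, hT⟩ := xx_main G hG (fun θ _ => dil_herm _) (fun x => F |x|)
    (hFc.comp continuous_abs) (xx_abs_support hFs)
  set r : ℕ := min (ν * s) (ν * t) with hr
  have hr0 : (r : ℂ) ≠ 0 := by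
    have : 0 < r := lt_min (by positivity) (by positivity)
    exact_mod_cast this.ne'
  set c : ℂ := (2 * (r : ℂ) - (ν * s : ℕ) - (ν * t : ℕ)) * F 0 with hc
  have hsym : ∀ θ, svSum F (blockSymbol ν s t f θ) =
      2⁻¹ * (eigSum (fun z => F |z.re|) (G θ) + c) := by
    intro θ
    have := dil_svSum (blockSymbol ν s t f θ) F
    simp only [Fintype.card_prod, Fintype.card_fin] at this
    rw [hc, hr, ← this]
    ring
  have hmat : ∀ N : ℕ, svSum F (blockMatEq ν s t f N) =
      2⁻¹ * (eigSum (fun z => F |z.re|) (blockToeplitz G N N) + N * c) := by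
    intro N
    have := dil_svSum (blockMatEq ν s t f N) F
    rw [xx_dil_T] at this
    simp only [Fintype.card_prod, Fintype.card_fin] at this
    have e : min (ν * N * s) (ν * N * t) = N * r := by
      rw [hr, Nat.mul_min_mul_left, Nat.mul_min_mul_left]; ring
    rw [e] at this
    have h2 : svSum F (blockMatEq ν s t f N) = 2⁻¹ * (2 * svSum F (blockMatEq ν s t f N)) := by ring
    rw [h2, this, hc]
    push_cast
    ring
  simp only [hsym, Fintype.card_prod, Fintype.card_fin, xx_vol]
  rw [← hr]
  have hlim : (((2 * π : ℝ) : ℂ)⁻¹ * ∫ θ in Set.Icc (-π) π, (r : ℂ)⁻¹ *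
      (2⁻¹ * (eigSum (fun z => F |z.re|) (G θ) + c))) = (r : ℂ)⁻¹ * (2⁻¹ * ((((2 * π : ℝ) : ℂ)⁻¹ *
        ∫ θ in Set.Icc (-π) π, eigSum (fun z => F |z.re|) (G θ)) + c)) := by
    rw [integral_const_mul, integral_const_mul, integral_add hI (by simp)]
    rw [setIntegral_const, measureReal_def, xx_vol]
    have : ((2 * π : ℝ) : ℂ) ≠ 0 := by exact_mod_cast (by positivity : (2 * π : ℝ) ≠ 0)
    rw [Complex.real_smul]
    field_simp
  rw [hlim]
  refine (((hT.add_const c).const_mul 2⁻¹).const_mul (r : ℂ)⁻¹).congr' ?_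
  filter_upwards [eventually_gt_atTop 0] with N hN
  have hN' : (N : ℂ) ≠ 0 := by exact_mod_cast hN.ne'
  have e : min (ν * N * s) (ν * N * t) = N * r := by
    rw [hr, Nat.mul_min_mul_left, Nat.mul_min_mul_left]; ring
  rw [hmat, e]
  push_cast
  field_simp

lemma xx_eig_T (ν s : ℕ) (f : Fin ν → Fin ν → ℝ → Matrix (Fin s) (Fin s) ℂ) (N : ℕ)
    (F : ℂ → ℂ) : eigSum F (blockMatEq ν s s f N) =
      eigSum F (blockToeplitz (blockSymbol ν s s f) N N) := by
  refine xx_eigSum_reindex (idxE ν N s) _ _ ?_ F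
  rintro ⟨⟨i, k⟩, a⟩ ⟨⟨j, l⟩, b⟩
  rfl

lemma xx_red (F : ℂ → ℂ) {m : Type*} [Fintype m] [DecidableEq m] {A : Matrix m m ℂ}
    (hA : A.IsHermitian) : eigSum (fun z => F z.re) A = eigSum F A := by
  rw [xx_eigSum hA, xx_eigSum hA]; simp

lemma xx_eig (ν s : ℕ) (hν : 2 ≤ ν) (hs : 0 < s)
    (f : Fin ν → Fin ν → ℝ → Matrix (Fin s) (Fin s) ℂ)
    (hf : ∀ i j a b, IntervalIntegrable (fun θ => f i j θ a b) volume (-π) π)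
    (hH : ∀ θ ∈ Set.Icc (-π) π, (blockSymbol ν s s f θ).IsHermitian) :
    DistributedEig (Set.Icc (-π) π) (blockSymbol ν s s f) (fun N => blockMatEq ν s s f N) := by
  intro F hFc hFs
  have hsupp : HasCompactSupport (fun x : ℝ => F x) :=
    hFs.comp_isClosedEmbedding Complex.isometry_ofReal.isClosedEmbedding
  obtain ⟨hI, hT⟩ := xx_main (blockSymbol ν s s f) (fun a b => hf _ _ _ _) hH (fun x => F x)
    (hFc.comp Complex.continuous_ofReal) hsupp
  have hmat : ∀ N : ℕ, eigSum F (blockMatEq ν s s f N) =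
      eigSum F (blockToeplitz (blockSymbol ν s s f) N N) := fun N => xx_eig_T ν s f N F
  have hν0 : (ν : ℂ) ≠ 0 := by exact_mod_cast (by omega : ν ≠ 0)
  have hs0 : (s : ℂ) ≠ 0 := by exact_mod_cast hs.ne'
  simp only [Fintype.card_prod, Fintype.card_fin, xx_vol, hmat]
  rw [integral_const_mul]
  rw [setIntegral_congr_fun measurableSet_Icc (g := fun θ => eigSum F (blockSymbol ν s s f θ))
    (fun θ hθ => xx_red F (hH θ hθ))] at hT
  have := (hT.const_mul ((ν * s : ℕ) : ℂ)⁻¹)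
  rw [← mul_assoc, mul_comm _ (((2 * π : ℝ) : ℂ)⁻¹), mul_assoc] at this
  refine this.congr fun N => ?_
  rw [xx_red F (xx_T_herm _ hH N), ← mul_assoc, ← mul_inv]
  congr 2
  push_cast
  ring

/-- for equal block sizes `n_1 = ⋯ = n_ν = n(ν) = N`, the permuted
block matrix satisfies `Π_s A_n Π_tᵀ = T_N(F)` with `F = (f_{i,j})_{i,j=1}^ν`; hence
`{A_n}_n ∼_σ F`, and, when `F` is Hermitian-valued (which forces `s = t`),
`{A_n}_n ∼_λ F`. -/
theorem equal_blocks_basic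
    (ν s t : ℕ) (hν : 2 ≤ ν) (hs : 0 < s) (ht : 0 < t)
    (f : Fin ν → Fin ν → ℝ → Matrix (Fin s) (Fin t) ℂ)
    (hf : ∀ i j a b, IntervalIntegrable (fun θ => f i j θ a b) volume (-π) π) :
    (∀ N : ℕ,
      permPi ν N s * blockMatEq ν s t f N * (permPi ν N t)ᵀ =
        toeplitzOfBlockSymbol ν s t f N) ∧
    DistributedSV (Set.Icc (-π) π) (blockSymbol ν s t f)
      (fun N => blockMatEq ν s t f N) ∧
    (∀ hst : s = t,
      (∀ θ ∈ Set.Icc (-π) π,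
        ((blockSymbol ν s t f θ).submatrix id
          (Prod.map id (Fin.cast hst))).IsHermitian) →
      DistributedEig (Set.Icc (-π) π)
        (fun θ => (blockSymbol ν s t f θ).submatrix id (Prod.map id (Fin.cast hst)))
        (fun N => (blockMatEq ν s t f N).submatrix id
          (Prod.map id (Fin.cast hst)))) := by
  refine ⟨fun N => xx_perm ν s t f N, xx_SV ν s t hν hs ht f hf, ?_⟩
  intro hst hH
  subst hst
  exact xx_eig ν s hν hs f hf hH

end
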